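/- In the Plancherel growth process, the position d_n of the box added at step n (so Λ_n = Λ_{n−1} ∪ {d_n}) satisfies: n^{−1/2}(a_n − b_n, a_n + b_n) converges in distribution as n → ∞ to (U, Ω_*(U)), where d_n = (a_n, b_n), U has the semicircle distribution with density (1/2π)√(4−u²) on [−2,2], and Ω_*(u) = (2/π)(u·arcsin(u/2) + √(4−u²)) for |u| ≤ 2. -/

import Mathlib

open MeasureTheory Filter
open scoped Topology

structure SYT (μ : YoungDiagram) where
  entry : ℕ → ℕ → ℕ
  mem_iff : ∀ i j, (i, j) ∈ μ ↔ 1 ≤ entry i j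
  le_card : ∀ i j, entry i j ≤ μ.card
  injOn : ∀ i j i' j', (i, j) ∈ μ → (i', j') ∈ μ → entry i j = entry i' j' →
    (i, j) = (i', j')
  row_lt : ∀ i j, (i, j + 1) ∈ μ → entry i j < entry i (j + 1)
  col_lt : ∀ i j, (i + 1, j) ∈ μ → entry i j < entry (i + 1) j

/-- The number of standard Young tableaux of shape `μ`. -/
noncomputable def fSYT (μ : YoungDiagram) : ℕ := Nat.card (SYT μ)

/-- `ν` is obtained from `μ` by adding a single box (`μ ↗ ν`). -/
def YDcovers (μ ν : YoungDiagram) : Prop := μ.cells ⊆ ν.cells ∧ ν.card = μ.card + 1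


/-- `t` is an infinite Young tableau: every cell of the quadrant is filled, every
positive integer appears exactly once, and entries increase along rows and columns
(cells are `(row, column)`). -/
def IsInfYT (t : ℕ → ℕ → ℕ) : Prop :=
  (∀ i j, 1 ≤ t i j) ∧ (∀ n, 1 ≤ n → ∃! c : ℕ × ℕ, t c.1 c.2 = n) ∧
  (∀ i j, t i j < t i (j + 1)) ∧ (∀ i j, t i j < t (i + 1) j)

/-- The cylinder event: the entries `1, …, n` of the infinite tableau form exactly the
standard Young tableau `s`. -/
def cylEvent (μ : YoungDiagram) (s : SYT μ) : Set (ℕ → ℕ → ℕ) :=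
  { t | ∀ i j, (i, j) ∈ μ → t i j = s.entry i j }

/-- `P` is the Plancherel measure of infinite order: a probability measure concentrated
on infinite Young tableaux giving each cylinder event its Plancherel probability
`fSYT μ / (μ.card)!`.  (These properties characterise the Plancherel measure.) -/
def PlancherelLike (P : MeasureTheory.Measure (ℕ → ℕ → ℕ)) : Prop :=
  MeasureTheory.IsProbabilityMeasure P ∧ P { t | IsInfYT t } = 1 ∧
  ∀ (μ : YoungDiagram) (s : SYT μ),
    P (cylEvent μ s) = ENNReal.ofReal ((fSYT μ : ℝ) / (Nat.factorial μ.card))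


/-- The Logan–Shepp–Vershik–Kerov limit shape. -/
noncomputable def Omegastar (u : ℝ) : ℝ :=
  if |u| ≤ 2 then (2 / Real.pi) * (u * Real.arcsin (u / 2) + Real.sqrt (4 - u ^ 2))
  else |u|


open scoped Classical in
/-- The cell of the infinite tableau containing the entry `n` (junk value if none). -/
noncomputable def entryPos (t : ℕ → ℕ → ℕ) (n : ℕ) : ℕ × ℕ :=
  if h : ∃ c : ℕ × ℕ, t c.1 c.2 = n then h.choose else (0, 0)

section PartialFractions

variable {ι : Type*} [DecidableEq ι]

/-- Residue weights. -/
noncomputable def resW (S : Finset ι) (y : ι → ℝ) (i : ι) : ℝ :=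
  ∏ j ∈ S.erase i, (1 + 1 / (y i - y j))

lemma resW_insert_self {S : Finset ι} {a : ι} (ha : a ∉ S) (y : ι → ℝ) :
    resW (insert a S) y a = ∏ j ∈ S, (1 + 1 / (y a - y j)) := by
  unfold resW
  rw [Finset.erase_insert ha]

lemma resW_insert_of_mem {S : Finset ι} {a i : ι} (ha : a ∉ S) (hi : i ∈ S) (y : ι → ℝ) :
    resW (insert a S) y i = (1 + 1 / (y i - y a)) * resW S y i := by
  unfold resW
  have hne : a ≠ i := fun h => ha (h ▸ hi)
  rw [Finset.erase_insert_of_ne hne, Finset.prod_insert]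
  simp [ha]

lemma pf_scalar (S : Finset ι) (y : ι → ℝ) (hinj : Set.InjOn y S) :
    ∀ z : ℝ, (∀ j ∈ S, z ≠ y j) →
    ∏ j ∈ S, (1 + 1 / (z - y j)) = 1 + ∑ i ∈ S, resW S y i / (z - y i) := by
  induction S using Finset.induction_on with
  | empty => intro z _; simp
  | insert a S ha ih =>
    intro z hz
    have hinjS : Set.InjOn y S := hinj.mono (by simp)
    have haS : ∀ j ∈ S, y a ≠ y j := by
      intro j hj h
      have := hinj (by simp) (by simp [hj]) h
      exact ha (this ▸ hj)
    have hza : z ≠ y a := hz a (by simp)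
    have hzS : ∀ j ∈ S, z ≠ y j := fun j hj => hz j (by simp [hj])
    rw [Finset.prod_insert ha, Finset.sum_insert ha, resW_insert_self ha, ih hinjS z hzS,
      ih hinjS (y a) haS]
    have : ∑ i ∈ S, resW (insert a S) y i / (z - y i) =
        ∑ i ∈ S, (resW S y i / (z - y i) + (resW S y i / (z - y i) - resW S y i / (y a - y i)) / (z - y a)) := by
      refine Finset.sum_congr rfl fun i hi => ?_
      rw [resW_insert_of_mem ha hi]
      have h1 := sub_ne_zero.2 (hzS i hi)
      have h2 := sub_ne_zero.2 (haS i hi)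
      have h3 := sub_ne_zero.2 hza
      have h4 : y i - y a ≠ 0 := by intro h; apply h2; linarith
      field_simp
      ring
    rw [this, Finset.sum_add_distrib, ← Finset.sum_div, Finset.sum_sub_distrib]
    have h3 := sub_ne_zero.2 hza
    field_simp
    ring

lemma resW_sum (S : Finset ι) (y : ι → ℝ) (hinj : Set.InjOn y S) :
    ∑ i ∈ S, resW S y i = S.card := by
  induction S using Finset.induction_on with
  | empty => simp
  | insert a S ha ih =>
    have hinjS : Set.InjOn y S := hinj.mono (by simp)
    have haS : ∀ j ∈ S, y a ≠ y j := by
      intro j hj h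
      have := hinj (by simp) (by simp [hj]) h
      exact ha (this ▸ hj)
    rw [Finset.sum_insert ha, resW_insert_self ha, pf_scalar S y hinjS _ haS]
    have : ∑ i ∈ S, resW (insert a S) y i =
        ∑ i ∈ S, (resW S y i - resW S y i / (y a - y i)) := by
      refine Finset.sum_congr rfl fun i hi => ?_
      rw [resW_insert_of_mem ha hi]
      have h2 := sub_ne_zero.2 (haS i hi)
      have h4 : y i - y a ≠ 0 := by intro h; apply h2; linarith
      field_simp
      ring
    rw [this, Finset.sum_sub_distrib, ih hinjS, Finset.card_insert_of_notMem ha]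
    push_cast
    ring

lemma resW_sum_mul (S : Finset ι) (y : ι → ℝ) (hinj : Set.InjOn y S) :
    ∑ i ∈ S, resW S y i * y i = ∑ i ∈ S, y i + S.card * (S.card - 1) / 2 := by
  induction S using Finset.induction_on with
  | empty => simp
  | insert a S ha ih =>
    have hinjS : Set.InjOn y S := hinj.mono (by simp)
    have haS : ∀ j ∈ S, y a ≠ y j := by
      intro j hj h
      have := hinj (by simp) (by simp [hj]) h
      exact ha (this ▸ hj)
    rw [Finset.sum_insert ha, resW_insert_self ha, pf_scalar S y hinjS _ haS]
    have : ∑ i ∈ S, resW (insert a S) y i * y i =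
        ∑ i ∈ S, (resW S y i * y i + resW S y i - y a * (resW S y i / (y a - y i))) := by
      refine Finset.sum_congr rfl fun i hi => ?_
      rw [resW_insert_of_mem ha hi]
      have h2 := sub_ne_zero.2 (haS i hi)
      have h4 : y i - y a ≠ 0 := by intro h; apply h2; linarith
      field_simp
      ring
    rw [this, Finset.sum_sub_distrib, Finset.sum_add_distrib, ih hinjS, ← Finset.mul_sum,
      resW_sum S y hinjS, Finset.card_insert_of_notMem ha, Finset.sum_insert ha]
    push_cast
    ring

open PowerSeries in
/-- geometric series -/
noncomputable def geo (y : ℝ) : PowerSeries ℝ := PowerSeries.mk (fun k => y ^ k)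

open PowerSeries in
lemma geo_mul (y : ℝ) : (1 - C y * X) * geo y = 1 := by
  ext n
  cases n with
  | zero => simp [geo, sub_mul, mul_assoc]
  | succ n =>
    simp [geo, sub_mul, mul_assoc, PowerSeries.coeff_succ_X_mul, PowerSeries.coeff_one, pow_succ]
    ring

open PowerSeries in
lemma geo_geo (y z : ℝ) : C (y - z) * (X * geo y * geo z) = geo y - geo z := by
  have h1 := geo_mul y
  have h2 := geo_mul z
  rw [map_sub]
  linear_combination (geo y) * h2 - (geo z) * h1

open PowerSeries in
lemma geo_geo' {y z : ℝ} (h : y ≠ z) :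
    X * geo y * geo z = C (1 / (y - z)) * (geo y - geo z) := by
  rw [← geo_geo, ← mul_assoc, ← map_mul, one_div_mul_cancel (sub_ne_zero.2 h)]
  simp

open PowerSeries in
lemma pf_series (S : Finset ι) (y : ι → ℝ) (hinj : Set.InjOn y S) :
    ∏ j ∈ S, (1 + X * geo (y j)) = 1 + ∑ i ∈ S, C (resW S y i) * (X * geo (y i)) := by
  induction S using Finset.induction_on with
  | empty => simp
  | insert a S ha ih =>
    have hinjS : Set.InjOn y S := hinj.mono (by simp)
    have haS : ∀ j ∈ S, y a ≠ y j := by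
      intro j hj h
      have := hinj (by simp) (by simp [hj]) h
      exact ha (this ▸ hj)
    rw [Finset.prod_insert ha, Finset.sum_insert ha, resW_insert_self ha,
      pf_scalar S y hinjS (y a) haS, ih hinjS]
    have : ∑ i ∈ S, C (resW (insert a S) y i) * (X * geo (y i)) =
        ∑ i ∈ S, (C (resW S y i) * (X * geo (y i)) +
          (X * geo (y a)) * (C (resW S y i) * (X * geo (y i))) - 
            (X * geo (y a)) * C (resW S y i / (y a - y i))) := by
      refine Finset.sum_congr rfl fun i hi => ?_
      rw [resW_insert_of_mem ha hi]
      have h5 := geo_geo' (haS i hi).symm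
      have h2 := sub_ne_zero.2 (haS i hi)
      have h4 : y i - y a ≠ 0 := by intro h; apply h2; linarith
      have h6 : (resW S y i / (y a - y i)) = - (resW S y i * (1 / (y i - y a))) := by
        field_simp
        ring
      rw [h6]
      simp only [map_add, map_mul, map_one, map_neg]
      linear_combination (- C (resW S y i) * X) * h5
    rw [this, Finset.sum_sub_distrib, Finset.sum_add_distrib, ← Finset.mul_sum, ← Finset.mul_sum,
      map_add, map_one, map_sum]
    ring

end PartialFractions

section YD

/-- row `i` may receive a new box -/
def Addable (μ : YoungDiagram) (i : ℕ) : Prop := ∀ i' < i, μ.rowLen i < μ.rowLen i'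

open Classical in
/-- Add a box at the end of row `i` (if possible). -/
noncomputable def addCell (μ : YoungDiagram) (i : ℕ) : YoungDiagram :=
  if h : Addable μ i then
    { cells := insert (i, μ.rowLen i) μ.cells
      isLowerSet := by
        intro a b hba ha
        obtain ⟨a1, a2⟩ := a
        obtain ⟨b1, b2⟩ := b
        simp only [Finset.coe_insert, Set.mem_insert_iff, Finset.mem_coe, Prod.mk.injEq,
          YoungDiagram.mem_cells, YoungDiagram.mem_iff_lt_rowLen] at ha ⊢
        simp only [Prod.mk_le_mk] at hba
        obtain ⟨h1, h2⟩ := hba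
        rcases ha with ⟨rfl, rfl⟩ | ha
        · rcases h1.lt_or_eq with h1 | rfl
          · right
            have := h _ h1
            omega
          · omega
        · right
          have := μ.rowLen_anti _ _ h1
          omega }
  else μ

lemma addCell_cells {μ : YoungDiagram} {i : ℕ} (h : Addable μ i) :
    (addCell μ i).cells = insert (i, μ.rowLen i) μ.cells := by
  classical
  unfold addCell
  rw [dif_pos h]

lemma new_notMem (μ : YoungDiagram) (i : ℕ) : (i, μ.rowLen i) ∉ μ := by
  simp [YoungDiagram.mem_iff_lt_rowLen]

lemma mem_addCell {μ : YoungDiagram} {i : ℕ} (h : Addable μ i) (c : ℕ × ℕ) :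
    c ∈ addCell μ i ↔ c = (i, μ.rowLen i) ∨ c ∈ μ := by
  rw [← YoungDiagram.mem_cells, addCell_cells h, Finset.mem_insert, YoungDiagram.mem_cells]

lemma addCell_card {μ : YoungDiagram} {i : ℕ} (h : Addable μ i) :
    (addCell μ i).card = μ.card + 1 := by
  unfold YoungDiagram.card
  rw [addCell_cells h, Finset.card_insert_of_notMem]
  simpa using new_notMem μ i

lemma rowLen_eq_of {μ : YoungDiagram} {i k : ℕ} (h : ∀ j, (i, j) ∈ μ ↔ j < k) : μ.rowLen i = k := by
  have h1 := h (μ.rowLen i)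
  have h2 := h k
  simp only [YoungDiagram.mem_iff_lt_rowLen] at h1 h2
  omega

lemma addCell_rowLen {μ : YoungDiagram} {i : ℕ} (h : Addable μ i) (k : ℕ) :
    (addCell μ i).rowLen k = if k = i then μ.rowLen i + 1 else μ.rowLen k := by
  apply rowLen_eq_of
  intro j
  rw [mem_addCell h, YoungDiagram.mem_iff_lt_rowLen]
  split_ifs with hk
  · subst hk
    simp
    omega
  · simp [hk]

/-- the last box of row `i` may be removed -/
def Removable (μ : YoungDiagram) (i : ℕ) : Prop := μ.rowLen (i + 1) < μ.rowLen i

instance (μ : YoungDiagram) (i : ℕ) : Decidable (Removable μ i) :=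
  inferInstanceAs (Decidable (_ < _))

open Classical in
/-- Remove the last box of row `i` (if possible). -/
noncomputable def remCell (μ : YoungDiagram) (i : ℕ) : YoungDiagram :=
  if h : Removable μ i then
    { cells := μ.cells.erase (i, μ.rowLen i - 1)
      isLowerSet := by
        intro a b hba ha
        obtain ⟨a1, a2⟩ := a
        obtain ⟨b1, b2⟩ := b
        simp only [Finset.mem_coe, Finset.mem_erase, ne_eq, Prod.mk.injEq, not_and,
          YoungDiagram.mem_cells, YoungDiagram.mem_iff_lt_rowLen] at ha ⊢
        simp only [Prod.mk_le_mk] at hba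
        obtain ⟨h1, h2⟩ := hba
        have h3 := μ.rowLen_anti _ _ h1
        refine ⟨?_, by omega⟩
        rintro rfl
        unfold Removable at h
        rcases h1.lt_or_eq with h1 | rfl
        · have := μ.rowLen_anti (b1 + 1) a1 h1
          omega
        · have := ha.1 rfl
          omega }
  else μ

lemma mem_remCell {μ : YoungDiagram} {i : ℕ} (h : Removable μ i) (c : ℕ × ℕ) :
    c ∈ remCell μ i ↔ c ≠ (i, μ.rowLen i - 1) ∧ c ∈ μ := by
  classical
  rw [← YoungDiagram.mem_cells]
  unfold remCell
  rw [dif_pos h]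
  simp

lemma remCell_rowLen {μ : YoungDiagram} {i : ℕ} (h : Removable μ i) (k : ℕ) :
    (remCell μ i).rowLen k = if k = i then μ.rowLen i - 1 else μ.rowLen k := by
  apply rowLen_eq_of
  intro j
  rw [mem_remCell h, YoungDiagram.mem_iff_lt_rowLen]
  split_ifs with hk
  · subst hk
    simp
    omega
  · simp [hk]

lemma remCell_card {μ : YoungDiagram} {i : ℕ} (h : Removable μ i) :
    (remCell μ i).card + 1 = μ.card := by
  classical
  unfold YoungDiagram.card
  have : (remCell μ i).cells = μ.cells.erase (i, μ.rowLen i - 1) := by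
    ext c
    rw [YoungDiagram.mem_cells, mem_remCell h]
    simp
  rw [this, Finset.card_erase_add_one]
  rw [YoungDiagram.mem_cells, YoungDiagram.mem_iff_lt_rowLen]
  unfold Removable at h
  omega

lemma card_eq_sum_rowLen (μ : YoungDiagram) (N : ℕ) (hN : μ.rowLen N = 0) :
    μ.card = ∑ i ∈ Finset.range N, μ.rowLen i := by
  classical
  unfold YoungDiagram.card
  rw [Finset.card_eq_sum_card_fiberwise (f := Prod.fst) (t := Finset.range N)]
  · refine Finset.sum_congr rfl fun i _ => ?_
    rw [YoungDiagram.rowLen_eq_card]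
    rfl
  · rintro ⟨a, b⟩ hc
    simp only [Finset.mem_coe, YoungDiagram.mem_cells, YoungDiagram.mem_iff_lt_rowLen,
      Finset.coe_range, Set.mem_Iio] at hc ⊢
    by_contra hcon
    have := μ.rowLen_anti N a (by omega)
    omega

lemma rowLen_zero_of_card (μ : YoungDiagram) (i : ℕ) (hi : μ.card ≤ i) : μ.rowLen i = 0 := by
  classical
  by_contra hcon
  have hsub : (Finset.range (i+1)).image (fun k => (k, 0)) ⊆ μ.cells := by
    intro c hc
    simp only [Finset.mem_image, Finset.mem_range] at hc
    obtain ⟨k, hk, rfl⟩ := hc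
    rw [YoungDiagram.mem_cells, YoungDiagram.mem_iff_lt_rowLen]
    have := μ.rowLen_anti k i (by omega)
    omega
  have := Finset.card_le_card hsub
  rw [Finset.card_image_of_injective _ (by intro a b h; simpa using h)] at this
  simp at this
  unfold YoungDiagram.card at hi
  omega

/-- A tableau extended by one box. -/
noncomputable def SYT.extend {μ : YoungDiagram} (s : SYT μ) {i : ℕ} (h : Addable μ i) :
    SYT (addCell μ i) where
  entry a b := if (a, b) = (i, μ.rowLen i) then μ.card + 1 else s.entry a b
  mem_iff a b := by
    rw [mem_addCell h]
    split_ifs with h1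
    · simp [h1]
    · simp only [h1, false_or]
      exact s.mem_iff a b
  le_card a b := by
    rw [addCell_card h]
    split_ifs with h1
    · exact le_rfl
    · exact (s.le_card a b).trans (by omega)
  injOn a b a' b' h1 h2 h3 := by
    rw [mem_addCell h] at h1 h2
    have h4 := s.le_card a b
    have h5 := s.le_card a' b'
    split_ifs at h3 with h6 h7 h7
    · rw [h6, h7]
    · omega
    · omega
    · exact s.injOn a b a' b' (h1.resolve_left h6) (h2.resolve_left h7) h3
  row_lt a b h1 := by
    have h4 := s.le_card a b
    rw [mem_addCell h] at h1
    have h2 : (a, b) ≠ (i, μ.rowLen i) := by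
      intro h3
      simp only [Prod.mk.injEq] at h3
      obtain ⟨rfl, rfl⟩ := h3
      simp [YoungDiagram.mem_iff_lt_rowLen] at h1
    rw [if_neg h2]
    split_ifs with h3
    · omega
    · exact s.row_lt a b (h1.resolve_left h3)
  col_lt a b h1 := by
    have h4 := s.le_card a b
    rw [mem_addCell h] at h1
    have h2 : (a, b) ≠ (i, μ.rowLen i) := by
      intro h3
      simp only [Prod.mk.injEq] at h3
      obtain ⟨rfl, rfl⟩ := h3
      simp [YoungDiagram.mem_iff_lt_rowLen] at h1
      have := μ.rowLen_anti a (a+1) (by omega)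
      omega
    rw [if_neg h2]
    split_ifs with h3
    · omega
    · exact s.col_lt a b (h1.resolve_left h3)

lemma SYT.surj {μ : YoungDiagram} (s : SYT μ) (m : ℕ) (h1 : 1 ≤ m) (h2 : m ≤ μ.card) :
    ∃ c : ℕ × ℕ, c ∈ μ ∧ s.entry c.1 c.2 = m := by
  classical
  have himg : μ.cells.image (fun c => s.entry c.1 c.2) = Finset.Icc 1 μ.card := by
    apply Finset.eq_of_subset_of_card_le
    · intro x hx
      simp only [Finset.mem_image, YoungDiagram.mem_cells] at hx
      obtain ⟨c, hc, rfl⟩ := hx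
      rw [Finset.mem_Icc]
      exact ⟨(s.mem_iff c.1 c.2).1 hc, s.le_card _ _⟩
    · rw [Finset.card_image_of_injOn]
      · simp
      · intro c hc d hd hcd
        exact s.injOn c.1 c.2 d.1 d.2 (by simpa using hc) (by simpa using hd) hcd
  have : m ∈ μ.cells.image (fun c => s.entry c.1 c.2) := by
    rw [himg, Finset.mem_Icc]; exact ⟨h1, h2⟩
  simpa only [Finset.mem_image, YoungDiagram.mem_cells] using this

lemma SYT.ext' {μ : YoungDiagram} {s s' : SYT μ} (h : s.entry = s'.entry) : s = s' := by
  cases s; cases s'; simp at h; subst h; rfl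

/-- The set of entry functions of tableaux. -/
def SYTset (μ : YoungDiagram) : Set (ℕ → ℕ → ℕ) := Set.range (fun s : SYT μ => s.entry)

lemma fSYT_eq_ncard (μ : YoungDiagram) : fSYT μ = (SYTset μ).ncard := by
  unfold fSYT SYTset
  rw [← Set.image_univ, Set.ncard_image_of_injective _ (fun s s' h => SYT.ext' h), Set.ncard_univ]

/-- put the value `n` at a cell -/
def putAt (c : ℕ × ℕ) (n : ℕ) (e : ℕ → ℕ → ℕ) : ℕ → ℕ → ℕ :=
  fun a b => if (a, b) = c then n else e a b

lemma addable_remCell {μ : YoungDiagram} {i : ℕ} (h : Removable μ i) : Addable (remCell μ i) i := by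
  intro i' hi'
  rw [remCell_rowLen h, remCell_rowLen h, if_pos rfl, if_neg (by omega)]
  have := μ.rowLen_anti i' i (by omega)
  unfold Removable at h
  omega

lemma addCell_remCell {μ : YoungDiagram} {i : ℕ} (h : Removable μ i) :
    addCell (remCell μ i) i = μ := by
  ext c
  rw [YoungDiagram.mem_cells, YoungDiagram.mem_cells, mem_addCell (addable_remCell h), remCell_rowLen h,
    if_pos rfl, mem_remCell h]
  constructor
  · rintro (rfl | h1)
    · rw [YoungDiagram.mem_iff_lt_rowLen]
      unfold Removable at h
      omega
    · exact h1.2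
  · intro h1
    by_cases h2 : c = (i, μ.rowLen i - 1)
    · exact Or.inl h2
    · exact Or.inr ⟨h2, h1⟩

/-- Remove the maximal entry. -/
noncomputable def SYT.restrict {μ : YoungDiagram} (s : SYT μ) {i : ℕ} (h : Removable μ i)
    (hs : s.entry i (μ.rowLen i - 1) = μ.card) : SYT (remCell μ i) where
  entry a b := if (a, b) = (i, μ.rowLen i - 1) then 0 else s.entry a b
  mem_iff a b := by
    rw [mem_remCell h]
    split_ifs with h1
    · simp [h1]
    · simp only [h1, ne_eq, not_false_eq_true, true_and]
      exact s.mem_iff a b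
  le_card a b := by
    have h0 := remCell_card h
    split_ifs with h1
    · omega
    · have h2 := s.le_card a b
      by_contra hcon
      have h3 : s.entry a b = μ.card := by omega
      apply h1
      apply s.injOn
      · rw [s.mem_iff]; omega
      · rw [s.mem_iff]; omega
      · omega
  injOn a b a' b' h1 h2 h3 := by
    rw [mem_remCell h] at h1 h2
    rw [if_neg h1.1, if_neg h2.1] at h3
    exact s.injOn a b a' b' h1.2 h2.2 h3
  row_lt a b h1 := by
    rw [mem_remCell h] at h1
    rw [if_neg h1.1]
    have := s.row_lt a b h1.2
    split_ifs <;> omega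
  col_lt a b h1 := by
    rw [mem_remCell h] at h1
    rw [if_neg h1.1]
    have := s.col_lt a b h1.2
    split_ifs <;> omega

lemma SYTset_decomp (μ : YoungDiagram) (N : ℕ) (hN : μ.rowLen N = 0) (hpos : 0 < μ.card) :
    SYTset μ = ⋃ i ∈ {i ∈ Finset.range N | Removable μ i},
      putAt (i, μ.rowLen i - 1) μ.card '' SYTset (remCell μ i) := by
  ext e
  simp only [Finset.mem_filter, Finset.mem_range, Set.mem_iUnion, Set.mem_image, exists_prop]
  constructor
  · rintro ⟨s, rfl⟩
    obtain ⟨⟨i, j⟩, hc, hs⟩ := s.surj μ.card hpos le_rfl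
    simp only at hs
    have hlt : j < μ.rowLen i := YoungDiagram.mem_iff_lt_rowLen.1 hc
    have h1 : (i, j + 1) ∉ μ := by
      intro h
      have := s.row_lt i j h
      have := s.le_card i (j+1)
      omega
    have h2 : (i + 1, j) ∉ μ := by
      intro h
      have := s.col_lt i j h
      have := s.le_card (i+1) j
      omega
    rw [YoungDiagram.mem_iff_lt_rowLen] at h1 h2
    have hj : j = μ.rowLen i - 1 := by omega
    have hrem : Removable μ i := by unfold Removable; omega
    refine ⟨i, ⟨?_, hrem⟩, (s.restrict hrem (hj ▸ hs)).entry, ⟨_, rfl⟩, ?_⟩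
    · by_contra hcon
      have := μ.rowLen_anti N i (by omega)
      omega
    · funext a b
      unfold putAt SYT.restrict
      simp only
      split_ifs with h
      · simp only [Prod.mk.injEq] at h
        rw [h.1, h.2, ← hj, hs]
      · rfl
  · rintro ⟨i, ⟨hi, hrem⟩, e', ⟨s, rfl⟩, rfl⟩
    have hcard := remCell_card hrem
    have hr : (remCell μ i).rowLen i = μ.rowLen i - 1 := by rw [remCell_rowLen hrem, if_pos rfl]
    have key : putAt (i, μ.rowLen i - 1) μ.card s.entry = (s.extend (addable_remCell hrem)).entry := by
      funext a b
      unfold putAt SYT.extend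
      simp only [hr, hcard]
    have : putAt (i, μ.rowLen i - 1) μ.card s.entry ∈ SYTset (addCell (remCell μ i) i) := by
      rw [key]; exact ⟨_, rfl⟩
    rwa [addCell_remCell hrem] at this

lemma SYTset_finite : ∀ (n : ℕ) (μ : YoungDiagram), μ.card = n → (SYTset μ).Finite := by
  intro n
  induction n with
  | zero =>
    intro μ hμ
    apply Set.Subsingleton.finite
    rintro _ ⟨s, rfl⟩ _ ⟨s', rfl⟩
    funext a b
    have h1 := s.le_card a b
    have h2 := s'.le_card a b
    simp only
    omega
  | succ n ih =>
    intro μ hμ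
    rw [SYTset_decomp μ μ.card (rowLen_zero_of_card _ _ le_rfl) (by omega)]
    apply Set.Finite.biUnion (Finset.finite_toSet _)
    intro i hi
    simp only [Finset.coe_filter, Set.mem_ofPred_eq] at hi
    apply Set.Finite.image
    apply ih
    have := remCell_card hi.2
    omega

lemma fSYT_rec (μ : YoungDiagram) (N : ℕ) (hN : μ.rowLen N = 0) (hpos : 0 < μ.card) :
    fSYT μ = ∑ i ∈ {i ∈ Finset.range N | Removable μ i}, fSYT (remCell μ i) := by
  classical
  have hfin : ∀ ν : YoungDiagram, (SYTset ν).Finite := fun ν => SYTset_finite _ ν rfl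
  rw [fSYT_eq_ncard, SYTset_decomp μ N hN hpos]
  have key := Finset.card_biUnion (s := {i ∈ Finset.range N | Removable μ i})
    (t := fun i => ((hfin (remCell μ i)).image (putAt (i, μ.rowLen i - 1) μ.card)).toFinset) ?_
  · have hf : (⋃ i ∈ {i ∈ Finset.range N | Removable μ i},
        putAt (i, μ.rowLen i - 1) μ.card '' SYTset (remCell μ i)).Finite := by
      apply Set.Finite.biUnion (Finset.finite_toSet _)
      intro i _
      exact (hfin _).image _
    rw [Set.ncard_eq_toFinset_card _ hf]
    convert key using 1
    · congr 1
      ext e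
      simp
    · refine Finset.sum_congr rfl fun i hi => ?_
      simp only [Finset.mem_filter] at hi
      rw [← Set.ncard_eq_toFinset_card _ ((hfin (remCell μ i)).image _), fSYT_eq_ncard,
        Set.InjOn.ncard_image]
      rintro _ ⟨s, rfl⟩ _ ⟨s', rfl⟩ h
      funext a b
      have h1 := congrFun (congrFun h a) b
      unfold putAt at h1
      by_cases hc : (a, b) = (i, μ.rowLen i - 1)
      · have h2 : (a, b) ∉ remCell μ i := by rw [mem_remCell hi.2]; simp [hc]
        have h3 := (s.mem_iff a b).not.1 h2
        have h4 := (s'.mem_iff a b).not.1 h2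
        simp only
        omega
      · simpa [hc] using h1
  · intro i hi j hj hij
    simp only [Finset.coe_filter, Set.mem_ofPred_eq] at hi hj
    rw [Function.onFun, Finset.disjoint_left]
    intro e he he'
    simp only [Set.Finite.mem_toFinset, Set.mem_image] at he he'
    obtain ⟨_, ⟨s, rfl⟩, rfl⟩ := he
    obtain ⟨_, ⟨s', rfl⟩, h⟩ := he'
    have h1 := congrFun (congrFun h i) (μ.rowLen i - 1)
    unfold putAt at h1
    rw [if_neg (by simp [hij]), if_pos rfl] at h1
    simp only at h1
    have h2 := s'.le_card i (μ.rowLen i - 1)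
    have h3 := remCell_card hj.2
    omega

end YD

section PartThree

open Finset

/-- The Frobenius expression. -/
noncomputable def FF (N : ℕ) (l : ℕ → ℕ) : ℝ :=
  ∏ i ∈ range N, ((∏ j ∈ range i, ((l j : ℝ) - l i)) / (Nat.factorial (l i) : ℝ))

lemma FF_succ (N : ℕ) (l : ℕ → ℕ) : FF (N + 1) l =
    FF N l * ((∏ j ∈ range N, ((l j : ℝ) - l N)) / (Nat.factorial (l N) : ℝ)) := by
  unfold FF; rw [prod_range_succ]

lemma FF_congr {N : ℕ} {l l' : ℕ → ℕ} (h : ∀ i < N, l i = l' i) : FF N l = FF N l' := by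
  unfold FF
  refine prod_congr rfl fun i hi => ?_
  rw [mem_range] at hi
  rw [h i hi]
  congr 1
  refine prod_congr rfl fun j hj => ?_
  rw [mem_range] at hj
  rw [h j (by omega)]

lemma FF_update (N : ℕ) (l l' : ℕ → ℕ) (k : ℕ) (hk : k < N) (hl' : l' k = l k + 1)
    (hl'' : ∀ j, j ≠ k → l' j = l j) (hne : ∀ j < N, j ≠ k → l j ≠ l k) :
    FF N l' * (l k + 1) = FF N l * resW (range N) (fun i => (l i : ℝ)) k := by
  induction N with
  | zero => omega
  | succ N ih =>
    rw [FF_succ, FF_succ]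
    by_cases h : k = N
    · subst h
      have h1 : FF k l' = FF k l := FF_congr fun i hi => hl'' i (by omega)
      have h2 : resW (range (k + 1)) (fun i => (l i : ℝ)) k =
          ∏ j ∈ range k, (1 + 1 / ((l k : ℝ) - l j)) := by
        rw [range_add_one, resW_insert_self (by simp)]
      have h3 : ∏ j ∈ range k, ((l' j : ℝ) - l' k) = (∏ j ∈ range k, ((l j : ℝ) - l k)) *
          ∏ j ∈ range k, (1 + 1 / ((l k : ℝ) - l j)) := by
        rw [← prod_mul_distrib]
        refine prod_congr rfl fun j hj => ?_
        rw [mem_range] at hj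
        rw [hl'' j (by omega), hl']
        have h4 : (l k : ℝ) - l j ≠ 0 := by
          rw [sub_ne_zero]
          exact_mod_cast (hne j (by omega) (by omega)).symm
        push_cast
        field_simp
        ring
      rw [h1, h2, h3, hl', Nat.factorial_succ]
      have h5 : ((Nat.factorial (l k) : ℕ) : ℝ) ≠ 0 := by exact_mod_cast Nat.factorial_ne_zero _
      push_cast
      have h6 : (l k : ℝ) + 1 ≠ 0 := by positivity
      field_simp
    · have h1 := ih (by omega) (fun j hj => hne j (by omega))
      have h2 : resW (range (N + 1)) (fun i => (l i : ℝ)) k =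
          (1 + 1 / ((l k : ℝ) - l N)) * resW (range N) (fun i => (l i : ℝ)) k := by
        rw [range_add_one, resW_insert_of_mem (by simp) (by simp; omega)]
      have h3 : ∏ j ∈ range N, ((l' j : ℝ) - l' N) = (∏ j ∈ range N, ((l j : ℝ) - l N)) *
          (1 + 1 / ((l k : ℝ) - l N)) := by
        have hkm : k ∈ range N := by simp; omega
        rw [← mul_prod_erase _ _ hkm, ← mul_prod_erase (range N) (fun j => (l j : ℝ) - l N) hkm,
          hl', hl'' N (by omega)]
        have h4 : (l k : ℝ) - l N ≠ 0 := by
          rw [sub_ne_zero]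
          exact_mod_cast (hne N (by omega) (by omega)).symm
        have h5 : ∏ x ∈ (range N).erase k, ((l' x : ℝ) - l N) =
            ∏ x ∈ (range N).erase k, ((l x : ℝ) - l N) := by
          refine prod_congr rfl fun j hj => ?_
          rw [hl'' j (by simp at hj; exact hj.1)]
        rw [h5]
        push_cast
        field_simp
        ring
      rw [h2, h3, hl'' N (by omega)]
      linear_combination ((∏ j ∈ range N, ((l j : ℝ) - l N)) *
          (1 + 1 / ((l k : ℝ) - l N)) / (Nat.factorial (l N) : ℝ)) * h1

lemma FF_ne_zero (N : ℕ) (l : ℕ → ℕ) (h : ∀ i < N, ∀ j < i, l i < l j) : FF N l ≠ 0 := by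
  unfold FF
  rw [prod_ne_zero_iff]
  intro i hi
  rw [mem_range] at hi
  apply div_ne_zero
  · rw [prod_ne_zero_iff]
    intro j hj
    rw [mem_range] at hj
    rw [sub_ne_zero]
    exact_mod_cast (h i hi j hj).ne'
  · exact_mod_cast Nat.factorial_ne_zero _

/-- shifted row lengths -/
def lsh (N : ℕ) (μ : YoungDiagram) (i : ℕ) : ℕ := μ.rowLen i + (N - 1 - i)

lemma lsh_lt (N : ℕ) (μ : YoungDiagram) : ∀ i < N, ∀ j < i, lsh N μ i < lsh N μ j := by
  intro i hi j hj
  unfold lsh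
  have := μ.rowLen_anti j i hj.le
  omega

lemma lsh_ne (N : ℕ) (μ : YoungDiagram) {i j : ℕ} (hi : i < N) (hj : j < N) (h : j ≠ i) :
    lsh N μ j ≠ lsh N μ i := by
  rcases lt_or_gt_of_ne h with h | h
  · exact (lsh_lt N μ i hi j h).ne'
  · exact (lsh_lt N μ j hj i h).ne

lemma lsh_injOn (N : ℕ) (μ : YoungDiagram) : Set.InjOn (fun i => (lsh N μ i : ℝ)) (range N) := by
  intro i hi j hj h
  by_contra hne
  simp only [coe_range, Set.mem_Iio] at hi hj
  have h' : (lsh N μ i : ℝ) = lsh N μ j := h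
  exact lsh_ne N μ hi hj (Ne.symm hne) (by exact_mod_cast h'.symm)

lemma FF_remove (N : ℕ) (μ : YoungDiagram) (hN : μ.rowLen N = 0) (i : ℕ) (hi : i < N) :
    (if Removable μ i then FF N (lsh N (remCell μ i)) else 0) =
      FF N (lsh N μ) * (lsh N μ i * resW (range N) (fun j => -(lsh N μ j : ℝ)) i) := by
  split_ifs with h
  · have hpos : 0 < μ.rowLen i := by unfold Removable at h; omega
    have h1 : lsh N μ i = lsh N (remCell μ i) i + 1 := by
      unfold lsh; rw [remCell_rowLen h, if_pos rfl]; omega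
    have h2 : ∀ j, j ≠ i → lsh N μ j = lsh N (remCell μ i) j := by
      intro j hj
      unfold lsh; rw [remCell_rowLen h, if_neg hj]
    have key := FF_update N (lsh N (remCell μ i)) (lsh N μ) i hi h1 h2
      (fun j hj hne => lsh_ne N _ hi hj hne)
    have h3 : resW (range N) (fun j => -(lsh N μ j : ℝ)) i *
        resW (range N) (fun j => (lsh N (remCell μ i) j : ℝ)) i = 1 := by
      unfold resW
      rw [← prod_mul_distrib]
      apply prod_eq_one
      intro j hj
      simp only [mem_erase, mem_range] at hj
      have h4 : (lsh N (remCell μ i) i : ℝ) - lsh N (remCell μ i) j ≠ 0 := by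
        rw [sub_ne_zero]; exact_mod_cast (lsh_ne N (remCell μ i) hi hj.2 hj.1).symm
      have h5 : (lsh N μ i : ℝ) - lsh N μ j ≠ 0 := by
        rw [sub_ne_zero]; exact_mod_cast (lsh_ne N μ hi hj.2 hj.1).symm
      have e1 : (lsh N μ i : ℝ) = lsh N (remCell μ i) i + 1 := by rw [h1]; push_cast; ring
      have e2 : (lsh N μ j : ℝ) = lsh N (remCell μ i) j := by rw [h2 j hj.1]
      beta_reduce
      rw [e1, e2] at h5
      rw [e1, e2]
      have h6 : -((lsh N (remCell μ i) i : ℝ) + 1) - -(lsh N (remCell μ i) j : ℝ) ≠ 0 := by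
        intro h; apply h5; linarith
      field_simp
      ring
    have h7 : (lsh N μ i : ℝ) = lsh N (remCell μ i) i + 1 := by rw [h1]; push_cast; ring
    rw [h7, ← mul_assoc, key, mul_assoc, mul_comm (resW _ _ _), h3, mul_one]
  · unfold Removable at h
    symm
    by_cases h1 : i + 1 < N
    · have h2 : resW (range N) (fun j => -(lsh N μ j : ℝ)) i = 0 := by
        unfold resW
        apply prod_eq_zero (i := i + 1) (by simp [h1])
        have h3 : lsh N μ i = lsh N μ (i+1) + 1 := by
          unfold lsh
          have := μ.rowLen_anti i (i+1) (by omega)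
          omega
        beta_reduce
        rw [h3]; push_cast; ring_nf
      rw [h2]; ring
    · have h2 : lsh N μ i = 0 := by
        have : i + 1 = N := by omega
        subst this
        unfold lsh
        omega
      rw [h2]; simp

lemma lsh_sum (N : ℕ) (μ : YoungDiagram) (hN : μ.rowLen N = 0) :
    ∑ i ∈ range N, (lsh N μ i : ℝ) = μ.card + N * (N - 1) / 2 := by
  rw [card_eq_sum_rowLen μ N hN]
  unfold lsh
  push_cast
  rw [sum_add_distrib]
  congr 1
  have h := sum_range_reflect (fun i => (i : ℝ)) N
  rw [h]
  clear h hN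
  induction N with
  | zero => simp
  | succ N ih => rw [sum_range_succ, ih]; push_cast; ring

lemma FF_rec (N : ℕ) (μ : YoungDiagram) (hN : μ.rowLen N = 0) :
    ∑ i ∈ {i ∈ range N | Removable μ i}, FF N (lsh N (remCell μ i)) =
      μ.card * FF N (lsh N μ) := by
  rw [sum_filter, sum_congr rfl (fun i hi => FF_remove N μ hN i (mem_range.1 hi)), ← mul_sum, mul_comm]
  congr 1
  have h1 := resW_sum_mul (range N) (fun j => -(lsh N μ j : ℝ))
    (fun i hi j hj h => lsh_injOn N μ hi hj (neg_injective h))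
  have h2 := lsh_sum N μ hN
  have h3 : ∑ i ∈ range N, (lsh N μ i : ℝ) * resW (range N) (fun j => -(lsh N μ j : ℝ)) i =
      - ∑ i ∈ range N, resW (range N) (fun j => -(lsh N μ j : ℝ)) i * -(lsh N μ i : ℝ) := by
    rw [← sum_neg_distrib]
    exact sum_congr rfl fun i _ => by ring
  rw [h3, h1, sum_neg_distrib, h2, card_range]
  ring

lemma card_bot : (⊥ : YoungDiagram).card = 0 := by
  simp [YoungDiagram.card]

lemma eq_bot_of_card {μ : YoungDiagram} (h : μ.card = 0) : μ = ⊥ := by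
  unfold YoungDiagram.card at h
  rw [card_eq_zero] at h
  ext c
  rw [h]; simp

lemma rowLen_bot (i : ℕ) : (⊥ : YoungDiagram).rowLen i = 0 :=
  rowLen_zero_of_card _ _ (by rw [card_bot]; omega)

/-- the empty tableau -/
def emptySYT : SYT ⊥ where
  entry _ _ := 0
  mem_iff := by simp
  le_card := by simp
  injOn := by simp
  row_lt := by simp
  col_lt := by simp

lemma fSYT_bot : fSYT ⊥ = 1 := by
  unfold fSYT
  rw [Nat.card_eq_one_iff_unique]
  refine ⟨⟨fun s s' => SYT.ext' ?_⟩, ⟨emptySYT⟩⟩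
  funext a b
  have h1 := s.le_card a b
  have h2 := s'.le_card a b
  rw [card_bot] at h1 h2
  omega

lemma fSYT_formula (N : ℕ) : ∀ (n : ℕ) (μ : YoungDiagram), μ.card = n → μ.rowLen N = 0 →
    (fSYT μ : ℝ) = Nat.factorial n * (FF N (lsh N μ) / FF N (lsh N ⊥)) := by
  intro n
  induction n with
  | zero =>
    intro μ hμ hN
    rw [eq_bot_of_card hμ, fSYT_bot, div_self (FF_ne_zero N _ (lsh_lt N _))]
    simp
  | succ n ih =>
    intro μ hμ hN
    rw [fSYT_rec μ N hN (by omega)]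
    push_cast
    have h1 : ∀ i ∈ {i ∈ range N | Removable μ i}, (fSYT (remCell μ i) : ℝ) =
        Nat.factorial n * (FF N (lsh N (remCell μ i)) / FF N (lsh N ⊥)) := by
      intro i hi
      simp only [mem_filter, mem_range] at hi
      apply ih
      · have := remCell_card hi.2; omega
      · rw [remCell_rowLen hi.2, if_neg (by omega), hN]
    rw [sum_congr rfl h1, ← mul_sum, ← sum_div, FF_rec N μ hN, hμ, Nat.factorial_succ]
    push_cast
    ring

lemma fSYT_pos (μ : YoungDiagram) : (0 : ℝ) < fSYT μ := by
  have h1 := fSYT_formula μ.card μ.card μ rfl (rowLen_zero_of_card _ _ le_rfl)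
  have h2 : (fSYT μ : ℝ) ≠ 0 := by
    rw [h1]
    apply mul_ne_zero (by exact_mod_cast Nat.factorial_ne_zero _)
    exact div_ne_zero (FF_ne_zero _ _ (lsh_lt _ _)) (FF_ne_zero _ _ (lsh_lt _ _))
  exact lt_of_le_of_ne (by positivity) h2.symm

open Classical in
/-- transition probabilities of the Plancherel growth -/
noncomputable def tp (μ : YoungDiagram) (i : ℕ) : ℝ :=
  if Addable μ i then (fSYT (addCell μ i) : ℝ) / ((μ.card + 1) * fSYT μ) else 0

lemma tp_nonneg (μ : YoungDiagram) (i : ℕ) : 0 ≤ tp μ i := by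
  unfold tp; split_ifs <;> positivity

/-- content of the box which can be added in row `i` -/
noncomputable def cc (μ : YoungDiagram) (i : ℕ) : ℝ := (μ.rowLen i : ℝ) - i

lemma lsh_eq_cc {N : ℕ} (μ : YoungDiagram) {i : ℕ} (hi : i < N) :
    (lsh N μ i : ℝ) = cc μ i + N - 1 := by
  unfold lsh cc
  have : ((N - 1 - i : ℕ) : ℝ) = N - 1 - i := by
    rw [Nat.cast_sub (by omega), Nat.cast_sub (by omega)]; push_cast; ring
  push_cast
  rw [this]; ring

lemma resW_lsh (N : ℕ) (μ : YoungDiagram) (i : ℕ) (hi : i < N) :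
    resW (range N) (fun j => (lsh N μ j : ℝ)) i = resW (range N) (cc μ) i := by
  unfold resW
  refine prod_congr rfl fun j hj => ?_
  simp only [mem_erase, mem_range] at hj
  beta_reduce
  rw [lsh_eq_cc μ hi, lsh_eq_cc μ hj.2]
  ring_nf

lemma cc_lt (μ : YoungDiagram) {i j : ℕ} (h : i < j) : cc μ j < cc μ i := by
  unfold cc
  have h1 : (μ.rowLen j : ℝ) ≤ μ.rowLen i := by exact_mod_cast μ.rowLen_anti i j h.le
  have h2 : (i : ℝ) < j := by exact_mod_cast h
  linarith

lemma cc_injective (μ : YoungDiagram) : Function.Injective (cc μ) :=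
  (show StrictAnti (cc μ) from fun _ _ h => cc_lt μ h).injective

lemma tp_formula (N : ℕ) (μ : YoungDiagram) (hN : μ.rowLen N = 0) (i : ℕ) (hi : i < N) :
    tp μ i = resW (range N) (cc μ) i / (cc μ i + N) := by
  unfold tp
  split_ifs with h
  · have h0 : (addCell μ i).rowLen N = 0 := by rw [addCell_rowLen h, if_neg (by omega), hN]
    rw [fSYT_formula N _ μ rfl hN, fSYT_formula N _ (addCell μ i) (addCell_card h) h0]
    have h1 : lsh N (addCell μ i) i = lsh N μ i + 1 := by
      unfold lsh; rw [addCell_rowLen h, if_pos rfl]; omega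
    have h2 : ∀ j, j ≠ i → lsh N (addCell μ i) j = lsh N μ j := by
      intro j hj
      unfold lsh; rw [addCell_rowLen h, if_neg hj]
    have key := FF_update N (lsh N μ) (lsh N (addCell μ i)) i hi h1 h2
      (fun j hj hne => lsh_ne N _ hi hj hne)
    rw [resW_lsh N μ i hi] at key
    have h3 : cc μ i + N = lsh N μ i + 1 := by rw [lsh_eq_cc μ hi]; ring
    rw [h3, Nat.factorial_succ]
    have h4 : (lsh N μ i : ℝ) + 1 ≠ 0 := by positivity
    have h5 := FF_ne_zero N _ (lsh_lt N μ)
    have h6 := FF_ne_zero N _ (lsh_lt N ⊥)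
    have h7 : ((Nat.factorial μ.card : ℕ) : ℝ) ≠ 0 := by exact_mod_cast Nat.factorial_ne_zero _
    push_cast
    field_simp
    linarith
  · symm
    unfold Addable at h
    push Not at h
    obtain ⟨i', hi', h⟩ := h
    have h1 : resW (range N) (cc μ) i = 0 := by
      unfold resW
      apply prod_eq_zero (i := i - 1) (by simp; omega)
      have h2 := μ.rowLen_anti i' (i-1) (by omega)
      have h3 := μ.rowLen_anti (i-1) i (by omega)
      have h4 : μ.rowLen i = μ.rowLen (i-1) := by omega
      unfold cc
      rw [h4, Nat.cast_sub (by omega)]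
      push_cast
      ring_nf
    rw [h1]; simp

open PowerSeries in
/-- The moment generating series -/
noncomputable def HH (N : ℕ) (μ : YoungDiagram) : PowerSeries ℝ :=
  geo (-(N : ℝ)) * ∏ i ∈ range N, (1 + X * geo (cc μ i))

open PowerSeries in
lemma HH_succ (N : ℕ) (μ : YoungDiagram) (hN : μ.rowLen N = 0) : HH (N + 1) μ = HH N μ := by
  unfold HH
  rw [prod_range_succ]
  have h1 : cc μ N = -(N : ℝ) := by unfold cc; rw [hN]; simp
  rw [h1]
  have h2 := geo_geo (-(N : ℝ)) (-((N + 1 : ℕ) : ℝ))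
  have h3 : -(N : ℝ) - -((N + 1 : ℕ) : ℝ) = 1 := by push_cast; ring
  rw [h3, map_one] at h2
  linear_combination (∏ i ∈ range N, (1 + X * geo (cc μ i))) * h2

open PowerSeries in
lemma HH_eq (n : ℕ) (μ : YoungDiagram) (hn : μ.rowLen n = 0) :
    HH (n + 1) μ = ∑ i ∈ range (n + 1), C (tp μ i) * geo (cc μ i) := by
  have hN : μ.rowLen (n + 1) = 0 := by have := μ.rowLen_anti n (n+1) (by omega); omega
  have hinj : Set.InjOn (cc μ) (range (n + 1)) := (cc_injective μ).injOn
  have hne : ∀ i ∈ range (n+1), cc μ i ≠ -((n+1 : ℕ) : ℝ) := by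
    intro i hi h
    rw [mem_range] at hi
    unfold cc at h
    have h1 : ((μ.rowLen i + (n + 1) : ℕ) : ℝ) = i := by push_cast at *; linarith
    have h2 : μ.rowLen i + (n+1) = i := by exact_mod_cast h1
    omega
  have hs := pf_scalar (range (n+1)) (cc μ) hinj (-((n+1 : ℕ) : ℝ)) (fun j hj => (hne j hj).symm)
  have h0 : ∏ j ∈ range (n+1), (1 + 1 / (-((n+1 : ℕ) : ℝ) - cc μ j)) = 0 := by
    apply prod_eq_zero (i := n) (by simp)
    unfold cc
    rw [hn]; push_cast
    ring_nf
  rw [h0] at hs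
  unfold HH
  rw [pf_series _ _ hinj, mul_add, mul_one, mul_sum]
  have h1 : ∀ i ∈ range (n+1), geo (-((n+1 : ℕ) : ℝ)) * (C (resW (range (n+1)) (cc μ) i) * (X * geo (cc μ i))) =
      C (tp μ i) * geo (cc μ i) + C (resW (range (n+1)) (cc μ) i / (-((n+1 : ℕ) : ℝ) - cc μ i)) * geo (-((n+1 : ℕ) : ℝ)) := by
    intro i hi
    rw [tp_formula (n+1) μ hN i (mem_range.1 hi)]
    have h2 := geo_geo' (hne i hi)
    have h3 : cc μ i - -((n+1 : ℕ) : ℝ) = cc μ i + (n+1 : ℕ) := by ring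
    rw [h3] at h2
    have h4 : -((n+1 : ℕ) : ℝ) - cc μ i = - (cc μ i + (n+1 : ℕ)) := by ring
    rw [h4, div_neg, div_eq_mul_one_div, map_neg, map_mul]
    linear_combination (C (resW (range (n+1)) (cc μ) i)) * h2
  rw [sum_congr rfl h1, sum_add_distrib, ← sum_mul, ← map_sum]
  have h5 : ∑ i ∈ range (n+1), resW (range (n+1)) (cc μ) i / (-((n+1 : ℕ) : ℝ) - cc μ i) = -1 := by linarith
  rw [h5]
  simp

/-- averaging over one growth step -/
noncomputable def TT (B : YoungDiagram → ℕ → ℝ) (μ : YoungDiagram) : ℝ :=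
  ∑ i ∈ range (μ.card + 1), tp μ i * B μ i

/-- moments of the transition measure -/
noncomputable def Mom (k : ℕ) (μ : YoungDiagram) : ℝ := TT (fun μ i => cc μ i ^ k) μ

open PowerSeries in
lemma coeff_HH (N : ℕ) (μ : YoungDiagram) (hN : μ.card ≤ N) (k : ℕ) :
    coeff k (HH N μ) = Mom k μ := by
  have h1 : ∀ d, HH (μ.card + d) μ = HH μ.card μ := by
    intro d
    induction d with
    | zero => rfl
    | succ d ih => rw [← add_assoc, HH_succ _ _ (rowLen_zero_of_card _ _ (by omega)), ih]
  obtain ⟨d, rfl⟩ := Nat.exists_eq_add_of_le hN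
  rw [h1 d, ← h1 1, HH_eq _ _ (rowLen_zero_of_card _ _ (by omega))]
  unfold Mom TT
  simp [geo]

lemma Mom_zero (μ : YoungDiagram) : Mom 0 μ = 1 := by
  rw [← coeff_HH μ.card μ le_rfl]
  simp [HH, geo, map_prod]

lemma tp_sum (μ : YoungDiagram) : ∑ i ∈ range (μ.card + 1), tp μ i = 1 := by
  have := Mom_zero μ
  unfold Mom TT at this
  simpa using this

lemma addable_lt {μ : YoungDiagram} {i : ℕ} (h : Addable μ i) : i < μ.card + 1 := by
  by_contra hcon
  have h1 := h μ.card (by omega)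
  have h2 := rowLen_zero_of_card μ μ.card le_rfl
  omega

open PowerSeries in
lemma Mom_addCell {μ : YoungDiagram} {i : ℕ} (h : Addable μ i) (k : ℕ) :
    Mom (k + 1) (addCell μ i) = Mom (k + 1) μ +
      ∑ ab ∈ antidiagonal k, Mom ab.1 μ * (((cc μ i + 1) ^ ab.2 - (cc μ i - 1) ^ ab.2) / 2) := by
  have hc := addCell_card h
  have hi := addable_lt h
  rw [← coeff_HH (μ.card + 1) _ (by omega)]
  have hcc : cc (addCell μ i) i = cc μ i + 1 := by
    unfold cc; rw [addCell_rowLen h, if_pos rfl]; push_cast; ring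
  have key : HH (μ.card + 1) (addCell μ i) = HH (μ.card + 1) μ + 
      X * (HH (μ.card + 1) μ * (C (1/2) * (geo (cc μ i + 1) - geo (cc μ i - 1)))) := by
    unfold HH
    have him : i ∈ range (μ.card + 1) := mem_range.2 hi
    rw [← mul_prod_erase _ _ him, ← mul_prod_erase (range (μ.card+1)) (fun i => 1 + X * geo (cc μ i)) him, hcc]
    have h5 : ∏ x ∈ (range (μ.card + 1)).erase i, (1 + X * geo (cc (addCell μ i) x)) =
        ∏ x ∈ (range (μ.card + 1)).erase i, (1 + X * geo (cc μ x)) := by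
      refine prod_congr rfl fun j hj => ?_
      simp only [mem_erase] at hj
      unfold cc
      rw [addCell_rowLen h, if_neg hj.1]
    rw [h5]
    set x := cc μ i
    have g0 := geo_mul x
    have g1 := geo_mul (x + 1)
    have g2 := geo_mul (x - 1)
    have g3 := geo_geo' (y := x + 1) (z := x - 1) (by linarith)
    have g4 : (1 : ℝ) / (x + 1 - (x - 1)) = 1 / 2 := by norm_num
    rw [g4] at g3
    rw [← g3]
    rw [map_add, map_one] at g1
    rw [map_sub, map_one] at g2
    have e0 : 1 + X * geo x = (1 - (C x - 1) * X) * geo x := by linear_combination -g0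
    have e1 : 1 + X * geo (x+1) = (1 - C x * X) * geo (x+1) := by linear_combination -g1
    have e2 : 1 + X * (X * geo (x+1) * geo (x-1)) = (1 - C x * X)^2 * (geo (x+1) * geo (x-1)) := by
      linear_combination (-(1 - (C x - 1) * X) * geo (x-1)) * g1 - g2
    have e3 : 1 + X * geo (x + 1) = (1 + X * geo x) * (1 + X * (X * geo (x+1) * geo (x-1))) := by
      rw [e0, e1, e2]
      linear_combination (-((1 - C x * X) * geo (x+1) * ((1 - (C x - 1) * X) * geo (x-1)))) * g0 -
        ((1 - C x * X) * geo (x+1)) * g2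
    rw [e3]
    ring
  rw [key, map_add, coeff_succ_X_mul, coeff_HH _ _ (by omega), PowerSeries.coeff_mul]
  congr 1
  refine sum_congr rfl fun ab _ => ?_
  rw [coeff_HH _ _ (by omega), PowerSeries.coeff_C_mul]
  simp only [geo, map_sub, coeff_mk]
  ring

end PartThree

section ObsSection
open Finset

/-- moments of the semicircle law -/
noncomputable def mm (k : ℕ) : ℝ := if Even k then (catalan (k / 2) : ℝ) else 0

lemma mm_zero : mm 0 = 1 := by simp [mm]

lemma mm_one : mm 1 = 0 := by simp [mm]

lemma mm_even (n : ℕ) : mm (2 * n) = catalan n := by simp [mm]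

lemma mm_odd (n : ℕ) : mm (2 * n + 1) = 0 := by simp [mm]

lemma mm_conv (k : ℕ) : mm (k + 2) = ∑ ab ∈ antidiagonal k, mm ab.1 * mm ab.2 := by
  rcases Nat.even_or_odd' k with ⟨n, rfl | rfl⟩
  · rw [show 2 * n + 2 = 2 * (n + 1) by ring, mm_even, catalan_succ']
    push_cast
    refine Finset.sum_of_injOn (fun ij => (2 * ij.1, 2 * ij.2)) ?_ ?_ ?_ ?_
    · rintro ⟨a, b⟩ _ ⟨c, d⟩ _ h
      simp at h ⊢
      exact h
    · rintro ⟨a, b⟩ h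
      simp at h ⊢
      omega
    · rintro ⟨a, b⟩ h h'
      simp only [HasAntidiagonal.mem_antidiagonal] at h
      rcases Nat.even_or_odd' a with ⟨a', rfl | rfl⟩
      · exfalso
        apply h'
        refine ⟨(a', n - a'), ?_, ?_⟩
        · simp; omega
        · simp; omega
      · simp [mm_odd]
    · rintro ⟨a, b⟩ _
      simp only [mm_even]
  · rw [show 2 * n + 1 + 2 = 2 * (n + 1) + 1 by ring, mm_odd]
    symm
    apply sum_eq_zero
    rintro ⟨a, b⟩ h
    simp only [HasAntidiagonal.mem_antidiagonal] at h
    rcases Nat.even_or_odd' a with ⟨a', rfl | rfl⟩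
    · have : b = 2 * (n - a') + 1 := by omega
      rw [this]; simp [mm_odd]
    · simp [mm_odd]

lemma mm_conv' (k : ℕ) :
    ∑ ab ∈ antidiagonal k, ((ab.2 : ℝ) + 1) * (mm ab.1 * mm ab.2) = ((k : ℝ) + 2) / 2 * mm (k + 2) := by
  have h1 : ∑ ab ∈ antidiagonal k, ((ab.1 : ℝ) + 1) * (mm ab.1 * mm ab.2) =
      ∑ ab ∈ antidiagonal k, ((ab.2 : ℝ) + 1) * (mm ab.1 * mm ab.2) := by
    rw [← Finset.Nat.sum_antidiagonal_swap]
    refine sum_congr rfl fun ab _ => ?_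
    simp only [Prod.fst_swap, Prod.snd_swap]; ring
  have h2 : ∑ ab ∈ antidiagonal k, ((ab.1 : ℝ) + 1) * (mm ab.1 * mm ab.2) +
      ∑ ab ∈ antidiagonal k, ((ab.2 : ℝ) + 1) * (mm ab.1 * mm ab.2) = ((k : ℝ) + 2) * mm (k + 2) := by
    rw [mm_conv, mul_sum, ← sum_add_distrib]
    refine sum_congr rfl fun ab h => ?_
    rw [HasAntidiagonal.mem_antidiagonal] at h
    rw [← h]; push_cast; ring
  linarith

lemma mm_rec (k : ℕ) : ((k : ℝ) + 4) * mm (k + 2) = 4 * (k + 1) * mm k := by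
  rcases Nat.even_or_odd' k with ⟨n, rfl | rfl⟩
  · rw [show 2 * n + 2 = 2 * (n + 1) by ring, mm_even, mm_even]
    have h1 : ((n : ℝ) + 1) * catalan n = n.centralBinom := by
      exact_mod_cast succ_mul_catalan_eq_centralBinom n
    have h2 : ((n : ℝ) + 1 + 1) * catalan (n + 1) = (n + 1).centralBinom := by
      exact_mod_cast succ_mul_catalan_eq_centralBinom (n + 1)
    have h3 : ((n : ℝ) + 1) * (n + 1).centralBinom = 2 * (2 * n + 1) * n.centralBinom := by
      exact_mod_cast Nat.succ_mul_centralBinom_succ n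
    have h4 : ((n : ℝ) + 1) ≠ 0 := by positivity
    apply mul_left_cancel₀ h4
    push_cast
    rw [← h1, ← h2] at h3
    linear_combination 2 * h3
  · rw [show 2 * n + 1 + 2 = 2 * (n + 1) + 1 by ring, mm_odd, mm_odd]; simp

/-- power sums of contents of the boxes -/
noncomputable def psum (k : ℕ) (μ : YoungDiagram) : ℝ :=
  ∑ c ∈ μ.cells, ((c.2 : ℝ) - c.1) ^ k

lemma psum_addCell {μ : YoungDiagram} {i : ℕ} (h : Addable μ i) (k : ℕ) :
    psum k (addCell μ i) = psum k μ + cc μ i ^ k := by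
  unfold psum
  rw [addCell_cells h, sum_insert (by simpa using new_notMem μ i)]
  unfold cc; ring

inductive Obs : ℤ → ℝ → (YoungDiagram → ℝ) → Prop
  | zero (w : ℤ) : Obs w 0 (fun _ => 0)
  | const (r : ℝ) : Obs 0 r (fun _ => r)
  | mom (k : ℕ) : Obs k (mm k) (Mom k)
  | ps (k : ℕ) : Obs (k + 2) (2 * mm k / (k + 2)) (psum k)
  | add {w : ℤ} {a b : ℝ} {A B : YoungDiagram → ℝ} :
      Obs w a A → Obs w b B → Obs w (a + b) (fun μ => A μ + B μ)
  | mul {w v : ℤ} {a b : ℝ} {A B : YoungDiagram → ℝ} :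
      Obs w a A → Obs v b B → Obs (w + v) (a * b) (fun μ => A μ * B μ)
  | weak {w v : ℤ} {a : ℝ} {A : YoungDiagram → ℝ} : Obs w a A → w < v → Obs v 0 A

inductive Obs2 : ℤ → ℝ → (YoungDiagram → ℝ → ℝ) → Prop
  | zero (w : ℤ) : Obs2 w 0 (fun _ _ => 0)
  | mk {w : ℤ} {a : ℝ} {A : YoungDiagram → ℝ} (j : ℕ) :
      Obs w a A → Obs2 (w + j) (a * mm j) (fun μ c => A μ * c ^ j)
  | add {w : ℤ} {a b : ℝ} {A B : YoungDiagram → ℝ → ℝ} :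
      Obs2 w a A → Obs2 w b B → Obs2 w (a + b) (fun μ c => A μ c + B μ c)
  | weak {w v : ℤ} {a : ℝ} {A : YoungDiagram → ℝ → ℝ} : Obs2 w a A → w < v → Obs2 v 0 A

lemma Obs.cast {w v : ℤ} {a b : ℝ} {A B : YoungDiagram → ℝ} (h : Obs w a A) (h1 : w = v)
    (h2 : a = b) (h3 : ∀ μ, A μ = B μ) : Obs v b B := by
  obtain rfl : A = B := funext h3
  subst h1 h2
  exact h

lemma Obs2.cast {w v : ℤ} {a b : ℝ} {A B : YoungDiagram → ℝ → ℝ} (h : Obs2 w a A) (h1 : w = v)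
    (h2 : a = b) (h3 : ∀ μ c, A μ c = B μ c) : Obs2 v b B := by
  obtain rfl : A = B := funext fun μ => funext fun c => h3 μ c
  subst h1 h2
  exact h

lemma Obs2.lmul {v : ℤ} {b : ℝ} {B : YoungDiagram → ℝ → ℝ} (hB : Obs2 v b B) :
    ∀ {w : ℤ} {a : ℝ} {A : YoungDiagram → ℝ}, Obs w a A →
      Obs2 (w + v) (a * b) (fun μ c => A μ * B μ c) := by
  induction hB with
  | zero v => intro w a A _; exact (Obs2.zero (w + v)).cast rfl (by simp) (by simp)
  | mk j h => intro w a A hA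
              exact (Obs2.mk j (hA.mul h)).cast (by ring) (by ring) (fun μ c => by ring)
  | add _ _ ih1 ih2 => intro w a A hA
                       exact ((ih1 hA).add (ih2 hA)).cast rfl (by ring) (fun μ c => by ring)
  | weak _ hlt ih => intro w a A hA
                     exact ((ih hA).weak (by omega)).cast rfl (by ring) (fun μ c => rfl)

lemma Obs2.mul {v w : ℤ} {a b : ℝ} {A B : YoungDiagram → ℝ → ℝ} (hA : Obs2 w a A)
    (hB : Obs2 v b B) : ∀ {u : ℤ}, w + v < u → Obs2 u 0 (fun μ c => A μ c * B μ c) := by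
  induction hA with
  | zero w => intro u hu; exact (Obs2.zero u).cast rfl rfl (by simp)
  | @mk w a A j h =>
    intro u hu
    have key : ∀ {v : ℤ} {b : ℝ} {B : YoungDiagram → ℝ → ℝ}, Obs2 v b B → ∀ {u : ℤ}, v + j < u →
        Obs2 u 0 (fun μ c => B μ c * c ^ j) := by
      intro v b B hB
      induction hB with
      | zero w => intro u hu; exact (Obs2.zero u).cast rfl rfl (by simp)
      | mk j' h' => intro u hu
                    exact ((Obs2.mk (j' + j) h').weak (by push_cast; omega)).cast rfl rfl
                      (fun μ c => by ring)
      | add _ _ ih1 ih2 => intro u hu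
                           exact ((ih1 hu).add (ih2 hu)).cast rfl (by ring) (fun μ c => by ring)
      | weak _ hlt ih => intro u hu; exact ih (by omega)
    exact ((key hB (u := u - w) (by omega)).lmul h).cast (by ring) (by ring) (fun μ c => by ring)
  | add _ _ ih1 ih2 => intro u hu
                       exact ((ih1 hu).add (ih2 hu)).cast rfl (by ring) (fun μ c => by ring)
  | weak _ hlt ih => intro u hu; exact ih (by omega)

lemma Obs2.sum {ι : Type*} (s : Finset ι) {w : ℤ} (a : ι → ℝ) (F : ι → YoungDiagram → ℝ → ℝ)
    (h : ∀ i ∈ s, Obs2 w (a i) (F i)) : Obs2 w (∑ i ∈ s, a i) (fun μ c => ∑ i ∈ s, F i μ c) := by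
  classical
  induction s using Finset.induction_on with
  | empty => exact (Obs2.zero w).cast rfl (by simp) (by simp)
  | insert i s hi ih =>
    exact ((h i (by simp)).add (ih fun j hj => h j (by simp [hj]))).cast rfl
      (by rw [sum_insert hi]) (fun μ c => by rw [sum_insert hi])

lemma diff_expand (b : ℕ) (c : ℝ) : ((c + 1) ^ (b + 1) - (c - 1) ^ (b + 1)) / 2 =
    ((b : ℝ) + 1) * c ^ b +
      ∑ j ∈ range b, ((b + 1).choose j * (1 - (-1) ^ (b + 1 - j)) / 2 : ℝ) * c ^ j := by
  have h1 : ((c + 1) ^ (b + 1) - (c - 1) ^ (b + 1)) / 2 =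
      ∑ j ∈ range (b + 2), ((b + 1).choose j * (1 - (-1) ^ (b + 1 - j)) / 2 : ℝ) * c ^ j := by
    rw [sub_eq_add_neg c 1, add_pow, add_pow, ← sum_sub_distrib, sum_div]
    refine sum_congr rfl fun j _ => ?_
    rw [one_pow]; ring
  rw [h1, sum_range_succ, sum_range_succ]
  simp
  ring

lemma Obs2_diff (a b : ℕ) : Obs2 ((a : ℤ) + b - 1) (b * (mm a * mm (b - 1)))
    (fun μ c => Mom a μ * (((c + 1) ^ b - (c - 1) ^ b) / 2)) := by
  cases b with
  | zero => exact (Obs2.zero _).cast rfl (by simp) (by simp)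
  | succ b =>
    have h1 : Obs2 ((a : ℤ) + b) (((b : ℝ) + 1) * (mm a * mm b))
        (fun μ c => ((b : ℝ) + 1) * Mom a μ * c ^ b) := by
      exact (Obs2.mk b ((Obs.const ((b : ℝ) + 1)).mul (Obs.mom a))).cast (by ring) (by ring)
        (fun μ c => by ring)
    have h2 := Obs2.sum (range b) (w := (a : ℤ) + b) (fun _ => 0)
      (fun j μ c => (((b + 1).choose j * (1 - (-1) ^ (b + 1 - j)) / 2 : ℝ) * Mom a μ) * c ^ j) (by
        intro j hj
        rw [mem_range] at hj
        exact (Obs2.mk j ((Obs.const _).mul (Obs.mom a))).weak (by push_cast; omega))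
    refine (h1.add h2).cast (by push_cast; ring) (by simp) ?_
    intro μ c
    rw [diff_expand, mul_add, mul_sum]
    congr 1
    · ring
    · exact sum_congr rfl fun j _ => by ring

lemma Obs.delta {w : ℤ} {a : ℝ} {A : YoungDiagram → ℝ} (h : Obs w a A) :
    ∃ B, Obs2 (w - 2) (w / 2 * a) B ∧ ∀ μ i, Addable μ i → A (addCell μ i) - A μ = B μ (cc μ i) := by
  induction h with
  | zero w => exact ⟨_, (Obs2.zero (w - 2)).cast rfl (by simp) (fun _ _ => rfl), by simp⟩
  | const r => exact ⟨_, (Obs2.zero (0 - 2)).cast rfl (by simp) (fun _ _ => rfl), by simp⟩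
  | mom k =>
    cases k with
    | zero => exact ⟨_, (Obs2.zero _).cast rfl (by simp) (fun _ _ => rfl), by simp [Mom_zero]⟩
    | succ k =>
      refine ⟨_, (Obs2.sum (antidiagonal k) (w := ((k + 1 : ℕ) : ℤ) - 2) _ _ (fun ab hab =>
        (Obs2_diff ab.1 ab.2).cast ?_ rfl (fun _ _ => rfl))).cast rfl ?_ (fun _ _ => rfl), ?_⟩
      · rw [HasAntidiagonal.mem_antidiagonal] at hab
        push_cast; omega
      · cases k with
        | zero => simp [mm_one]
        | succ k =>
          rw [Finset.Nat.sum_antidiagonal_succ']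
          have := mm_conv' k
          simp only [CharP.cast_eq_zero, zero_mul, add_zero, zero_add, Nat.cast_add, Nat.cast_one,
            Nat.add_sub_cancel]
          rw [this]
          push_cast; ring
      · intro μ i hi
        rw [Mom_addCell hi]; ring
  | ps k =>
    refine ⟨_, (Obs2.mk k (Obs.const 1)).cast (by push_cast; ring) ?_ (fun _ _ => rfl), ?_⟩
    · push_cast
      have : (k : ℝ) + 2 ≠ 0 := by positivity
      field_simp
    · intro μ i hi
      rw [psum_addCell hi]; ring
  | add _ _ ih1 ih2 =>
    obtain ⟨B1, h1, h1'⟩ := ih1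
    obtain ⟨B2, h2, h2'⟩ := ih2
    refine ⟨_, (h1.add h2).cast rfl (by ring) (fun _ _ => rfl), ?_⟩
    intro μ i hi
    have := h1' μ i hi
    have := h2' μ i hi
    linarith
  | @mul w v a b A A' hA hA' ih1 ih2 =>
    obtain ⟨B1, h1, h1'⟩ := ih1
    obtain ⟨B2, h2, h2'⟩ := ih2
    refine ⟨_, (((h2.lmul hA).cast (v := w + v - 2) (by ring) rfl (fun _ _ => rfl)).add
      (((h1.lmul hA').cast (by ring) rfl (fun _ _ => rfl)).add
        (h1.mul h2 (by omega)))).cast rfl (by push_cast; ring) (fun _ _ => rfl), ?_⟩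
    intro μ i hi
    rw [← h1' μ i hi, ← h2' μ i hi]
    ring
  | weak h hlt ih =>
    obtain ⟨B, h1, h1'⟩ := ih
    exact ⟨B, (h1.weak (by omega)).cast rfl (by simp) (fun _ _ => rfl), h1'⟩

lemma TT_add (B C : YoungDiagram → ℕ → ℝ) (μ : YoungDiagram) :
    TT (fun μ i => B μ i + C μ i) μ = TT B μ + TT C μ := by
  unfold TT; rw [← sum_add_distrib]; exact sum_congr rfl fun i _ => by ring

lemma TT_mul (A : YoungDiagram → ℝ) (C : YoungDiagram → ℕ → ℝ) (μ : YoungDiagram) :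
    TT (fun μ i => A μ * C μ i) μ = A μ * TT C μ := by
  unfold TT; rw [mul_sum]; exact sum_congr rfl fun i _ => by ring

lemma TT_const (A : YoungDiagram → ℝ) (μ : YoungDiagram) :
    TT (fun μ _ => A μ) μ = A μ := by
  unfold TT; rw [← sum_mul, tp_sum, one_mul]

lemma TT_mono {B C : YoungDiagram → ℕ → ℝ} {μ : YoungDiagram}
    (h : ∀ i, Addable μ i → B μ i ≤ C μ i) : TT B μ ≤ TT C μ := by
  classical
  unfold TT
  refine sum_le_sum fun i _ => ?_
  by_cases hi : Addable μ i
  · exact mul_le_mul_of_nonneg_left (h i hi) (tp_nonneg μ i)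
  · have : tp μ i = 0 := by unfold tp; rw [if_neg hi]
    rw [this]; simp

lemma TT_congr {B C : YoungDiagram → ℕ → ℝ} {μ : YoungDiagram}
    (h : ∀ i, Addable μ i → B μ i = C μ i) : TT B μ = TT C μ :=
  le_antisymm (TT_mono fun i hi => (h i hi).le) (TT_mono fun i hi => (h i hi).ge)

lemma Obs2.avg {w : ℤ} {a : ℝ} {B : YoungDiagram → ℝ → ℝ} (h : Obs2 w a B) :
    Obs w a (TT (fun μ i => B μ (cc μ i))) := by
  induction h with
  | zero w => exact (Obs.zero w).cast rfl rfl (fun μ => by simp [TT])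
  | @mk w a A j h =>
    exact (h.mul (Obs.mom j)).cast rfl rfl (fun μ => by
      rw [TT_mul A (fun μ i => cc μ i ^ j)]; rfl)
  | @add w a b A B _ _ ih1 ih2 =>
    exact (ih1.add ih2).cast rfl rfl (fun μ => (TT_add _ _ μ).symm)
  | weak _ hlt ih => exact ih.weak hlt

lemma Obs.low {w : ℤ} {a : ℝ} {A : YoungDiagram → ℝ} (h : Obs w a A) :
    (w < 0 → (a = 0 ∧ ∀ μ, A μ = 0)) ∧ (w = 0 → ∀ μ, A μ = a) := by
  induction h with
  | zero w => simp
  | const r => simp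
  | mom k =>
    refine ⟨fun h => by omega, fun h => ?_⟩
    have : k = 0 := by omega
    subst this
    intro μ; rw [Mom_zero, mm_zero]
  | ps k => exact ⟨fun h => by omega, fun h => by omega⟩
  | add _ _ ih1 ih2 =>
    refine ⟨fun h => ?_, fun h μ => ?_⟩
    · have h1 := ih1.1 h
      have h2 := ih2.1 h
      simp [h1, h2]
    · beta_reduce; rw [ih1.2 h, ih2.2 h]
  | @mul w v a b A A' hA hA' ih1 ih2 =>
    refine ⟨fun h => ?_, fun h μ => ?_⟩
    · have : w < 0 ∨ v < 0 := by omega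
      rcases this with h | h
      · simp [ih1.1 h]
      · simp [ih2.1 h]
    · have : w < 0 ∨ v < 0 ∨ (w = 0 ∧ v = 0) := by omega
      rcases this with h | h | ⟨h, h'⟩
      · simp [ih1.1 h]
      · simp [ih2.1 h]
      · beta_reduce; rw [ih1.2 h, ih2.2 h']
  | weak _ hlt ih =>
    exact ⟨fun h => ⟨rfl, (ih.1 (by omega)).2⟩, fun h => (ih.1 (by omega)).2⟩

/-- expectation of a function of the `n`-th diagram -/
noncomputable def Ex : ℕ → (YoungDiagram → ℝ) → ℝ
  | 0, A => A ⊥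
  | n + 1, A => Ex n (TT (fun μ i => A (addCell μ i)))

lemma Ex_succ (n : ℕ) (A : YoungDiagram → ℝ) :
    Ex (n + 1) A = Ex n (TT (fun μ i => A (addCell μ i))) := rfl

lemma Ex_mono : ∀ (n : ℕ) {A B : YoungDiagram → ℝ}, (∀ μ, μ.card = n → A μ ≤ B μ) → Ex n A ≤ Ex n B
  | 0, A, B, h => h ⊥ card_bot
  | n + 1, A, B, h => Ex_mono n fun μ hμ => TT_mono fun i hi => h _ (by rw [addCell_card hi, hμ])

lemma Ex_congr (n : ℕ) {A B : YoungDiagram → ℝ} (h : ∀ μ, μ.card = n → A μ = B μ) : Ex n A = Ex n B :=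
  le_antisymm (Ex_mono n fun μ hμ => (h μ hμ).le) (Ex_mono n fun μ hμ => (h μ hμ).ge)

lemma Ex_add : ∀ (n : ℕ) (A B : YoungDiagram → ℝ), Ex n (fun μ => A μ + B μ) = Ex n A + Ex n B
  | 0, A, B => rfl
  | n + 1, A, B => by
    rw [Ex_succ, Ex_succ, Ex_succ, ← Ex_add n]
    exact Ex_congr n fun μ _ => TT_add _ _ μ

lemma Ex_const : ∀ (n : ℕ) (r : ℝ), Ex n (fun _ => r) = r
  | 0, r => rfl
  | n + 1, r => by
    rw [Ex_succ]
    conv_rhs => rw [← Ex_const n r]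
    exact Ex_congr n fun μ _ => TT_const (fun _ => r) μ

lemma Ex_smul : ∀ (n : ℕ) (r : ℝ) (A : YoungDiagram → ℝ), Ex n (fun μ => r * A μ) = r * Ex n A
  | 0, r, A => rfl
  | n + 1, r, A => by
    rw [Ex_succ, Ex_succ, ← Ex_smul n]
    exact Ex_congr n fun μ _ => TT_mul (fun _ => r) _ μ

lemma Ex_sub (n : ℕ) (A B : YoungDiagram → ℝ) : Ex n (fun μ => A μ - B μ) = Ex n A - Ex n B := by
  have h1 := Ex_add n A (fun μ => (-1) * B μ)
  rw [Ex_smul] at h1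
  rw [sub_eq_add_neg, ← neg_one_mul, ← h1]
  exact Ex_congr n fun μ _ => by ring

lemma Ex_sum {ι : Type*} (n : ℕ) (s : Finset ι) (A : ι → YoungDiagram → ℝ) :
    Ex n (fun μ => ∑ i ∈ s, A i μ) = ∑ i ∈ s, Ex n (A i) := by
  classical
  induction s using Finset.induction_on with
  | empty => simp [Ex_const]
  | insert i s hi ih =>
    rw [sum_insert hi, ← ih, ← Ex_add]
    exact Ex_congr n fun μ _ => by rw [sum_insert hi]

lemma Ex_nonneg (n : ℕ) {A : YoungDiagram → ℝ} (h : ∀ μ, μ.card = n → 0 ≤ A μ) : 0 ≤ Ex n A := by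
  rw [← Ex_const n 0]; exact Ex_mono n h

lemma Ex_abs (n : ℕ) (A : YoungDiagram → ℝ) : |Ex n A| ≤ Ex n (fun μ => |A μ|) := by
  rw [abs_le]
  constructor
  · have := Ex_smul n (-1) (fun μ => |A μ|)
    have h2 : Ex n (fun μ => -1 * |A μ|) ≤ Ex n A :=
      Ex_mono n fun μ _ => by have := neg_abs_le (A μ); linarith
    linarith
  · exact Ex_mono n fun μ _ => le_abs_self _

lemma Obs.step {w : ℤ} {a : ℝ} {A : YoungDiagram → ℝ} (h : Obs w a A) :
    ∃ B, Obs (w - 2) (w / 2 * a) B ∧ ∀ n, Ex (n + 1) A = Ex n A + Ex n B := by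
  obtain ⟨B, hB, hAB⟩ := h.delta
  refine ⟨_, hB.avg, fun n => ?_⟩
  rw [Ex_succ, ← Ex_add]
  refine Ex_congr n fun μ _ => ?_
  conv_rhs => rw [← TT_const A μ]
  rw [← TT_add]
  refine TT_congr fun i hi => ?_
  have := hAB μ i hi
  linarith

end ObsSection

section AsympSection
open MeasureTheory Filter Finset
open scoped Topology

noncomputable def sg (n : ℕ) : ℝ := Real.sqrt ((n : ℝ) + 1)

lemma sg_sq (n : ℕ) : sg n ^ 2 = n + 1 := Real.sq_sqrt (by positivity)

lemma sg_pos (n : ℕ) : 0 < sg n := Real.sqrt_pos.2 (by positivity)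

lemma sg_one_le (n : ℕ) : 1 ≤ sg n := by
  rw [sg, Real.one_le_sqrt]; simp

lemma sg_tendsto : Tendsto sg atTop atTop := by
  unfold sg
  exact Real.tendsto_sqrt_atTop.comp (tendsto_atTop_add_const_right _ _ tendsto_natCast_atTop_atTop)

lemma sg_mono : Monotone sg := fun a b h => Real.sqrt_le_sqrt (by
  have : (a : ℝ) ≤ b := by exact_mod_cast h
  linarith)

lemma sg_ratio : Tendsto (fun n => sg (n + 1) / sg n) atTop (𝓝 1) := by
  have h1 : Tendsto (fun n : ℕ => Real.sqrt (1 + 1 / ((n : ℝ) + 1))) atTop (𝓝 (Real.sqrt (1 + 0))) :=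
    (Real.continuous_sqrt.tendsto _).comp
      (tendsto_const_nhds.add tendsto_one_div_add_atTop_nhds_zero_nat)
  rw [add_zero, Real.sqrt_one] at h1
  refine h1.congr fun n => ?_
  unfold sg
  rw [← Real.sqrt_div' _ (by positivity)]
  congr 1
  push_cast
  field_simp

lemma sg_diff (p : ℕ) : Tendsto (fun n => (sg (n + 1) ^ (p + 2) - sg n ^ (p + 2)) / sg n ^ p) atTop
    (𝓝 (((p : ℝ) + 2) / 2)) := by
  have h1 : Tendsto (fun n => (∑ i ∈ range (p + 2), (sg (n + 1) / sg n) ^ i) /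
      (sg (n + 1) / sg n + 1)) atTop (𝓝 ((∑ i ∈ range (p + 2), (1 : ℝ) ^ i) / (1 + 1))) := by
    refine Tendsto.div (tendsto_finsetSum _ fun i _ => sg_ratio.pow i)
      (sg_ratio.add tendsto_const_nhds) (by norm_num)
  have h2 : (∑ i ∈ range (p + 2), (1 : ℝ) ^ i) / (1 + 1) = ((p : ℝ) + 2) / 2 := by
    simp; norm_num
  rw [h2] at h1
  refine h1.congr fun n => ?_
  have hs := sg_pos n
  have hs' := sg_pos (n + 1)
  have h3 : sg (n + 1) ^ 2 = sg n ^ 2 + 1 := by rw [sg_sq, sg_sq]; push_cast; ring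
  set s := sg n
  set s' := sg (n + 1)
  have h4 := (Commute.all (s' / s) 1).geom_sum₂_mul (p + 2)
  simp only [one_pow, mul_one] at h4
  have h5 : s' ^ (p + 2) - s ^ (p + 2) = s ^ (p + 2) * ((s' / s) ^ (p + 2) - 1) := by
    rw [div_pow]; field_simp
  rw [h5, ← h4]
  have h6 : s' / s - 1 = 1 / (s ^ 2 * (s' / s + 1)) := by
    field_simp
    linear_combination h3
  rw [h6]
  field_simp
  ring

lemma cesaro (k : ℕ) (b : ℕ → ℝ) (β : ℝ) (h : Tendsto (fun m => b m / sg m ^ k) atTop (𝓝 β)) :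
    Tendsto (fun n => (∑ m ∈ range n, b m) / sg n ^ (k + 2)) atTop (𝓝 (2 * β / (k + 2))) := by
  set g : ℕ → ℝ := fun m => sg (m + 1) ^ (k + 2) - sg m ^ (k + 2) with hg
  have hsum : ∀ n, ∑ m ∈ range n, g m = sg n ^ (k + 2) - 1 := by
    intro n
    rw [hg, sum_range_sub (fun m => sg m ^ (k + 2))]
    simp [sg]
  have hk : ((k : ℝ) + 2) / 2 ≠ 0 := by positivity
  have hpt : Tendsto (fun n => sg n ^ (k + 2)) atTop atTop :=
    (tendsto_pow_atTop (by omega)).comp sg_tendsto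
  have hg0 : 0 ≤ g := fun m => sub_nonneg.2 (by
    have := sg_mono (Nat.le_succ m)
    have := (sg_pos m).le
    gcongr)
  have hgpos : ∀ᶠ m in atTop, g m ≠ 0 := by
    have := (sg_diff k).eventually_ne hk
    filter_upwards [this] with m hm h0
    apply hm
    show g m / _ = 0
    rw [h0, zero_div]
  have hlit : (fun m => b m - (2 * β / (k + 2)) * g m) =o[atTop] g := by
    rw [Asymptotics.isLittleO_iff_tendsto' (hgpos.mono fun m hm h0 => absurd h0 hm)]
    have h1 := (h.div (sg_diff k) hk).sub_const (2 * β / (k + 2))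
    have h2 : β / ((k + 2) / 2) - 2 * β / (k + 2) = 0 := by field_simp; ring
    rw [h2] at h1
    refine h1.congr' ?_
    filter_upwards [hgpos] with m hm
    have := (sg_pos m).ne'
    show b m / sg m ^ k / (g m / sg m ^ k) - _ = _
    field_simp
  have hS : Tendsto (fun n => ∑ i ∈ range n, g i) atTop atTop := by
    simp only [hsum]
    exact tendsto_atTop_add_const_right _ (-1) hpt
  have hl := hlit.sum_range hg0 hS
  have hl2 : (fun n => ∑ i ∈ range n, g i) =O[atTop] (fun n => sg n ^ (k + 2)) := by
    apply Asymptotics.IsBigO.of_bound 1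
    refine Eventually.of_forall fun n => ?_
    rw [hsum, one_mul, Real.norm_eq_abs, Real.norm_eq_abs]
    have : 1 ≤ sg n ^ (k + 2) := one_le_pow₀ (sg_one_le n)
    rw [abs_of_nonneg (by linarith), abs_of_nonneg (by linarith)]
    linarith
  have h3 := (hl.trans_isBigO hl2).tendsto_div_nhds_zero
  have h4 : Tendsto (fun n => (2 * β / (k + 2)) * (1 - (sg n ^ (k + 2))⁻¹)) atTop
      (𝓝 ((2 * β / (k + 2)) * (1 - 0))) :=
    (tendsto_const_nhds.sub hpt.inv_tendsto_atTop).const_mul _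
  have h5 := h3.add h4
  rw [zero_add, sub_zero, mul_one] at h5
  refine h5.congr fun n => ?_
  rw [sum_sub_distrib, ← mul_sum, hsum]
  have := (sg_pos n).ne'
  field_simp
  ring

lemma Obs.asymp : ∀ (k : ℕ) {a : ℝ} {A : YoungDiagram → ℝ}, Obs (k : ℤ) a A →
    Tendsto (fun n => Ex n A / sg n ^ k) atTop (𝓝 a) := by
  intro k
  induction k using Nat.strong_induction_on with
  | _ k ih =>
    intro a A h
    obtain ⟨B, hB, hstep⟩ := h.step
    have hEx : ∀ n, Ex n A = A ⊥ + ∑ m ∈ range n, Ex m B := by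
      intro n
      induction n with
      | zero => simp [Ex]
      | succ n ihn => rw [hstep, ihn, sum_range_succ]; ring
    rcases k with _ | _ | k
    · have h0 := h.low.2 (by simp)
      have : ∀ n, Ex n A = a := fun n => by
        rw [Ex_congr n (B := fun _ => a) fun μ _ => h0 μ, Ex_const]
      simp only [this, pow_zero, div_one]
      exact tendsto_const_nhds
    · have h0 := hB.low.1 (by norm_num)
      have ha : a = 0 := by have := h0.1; push_cast at this; linarith
      have hE : ∀ n, Ex n A = A ⊥ := by
        intro n
        rw [hEx]
        have : ∀ m, Ex m B = 0 := fun m => by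
          rw [Ex_congr m (B := fun _ => 0) fun μ _ => h0.2 μ, Ex_const]
        simp [this]
      simp only [hE, ha, zero_add, pow_one]
      exact tendsto_const_nhds.div_atTop sg_tendsto
    · have h1 := ih k (by omega) (hB.cast (by push_cast; ring) rfl (fun _ => rfl))
      have h2 := cesaro k _ _ h1
      have hpt : Tendsto (fun n => sg n ^ (k + 2)) atTop atTop :=
        (tendsto_pow_atTop (by omega)).comp sg_tendsto
      have h3 := (tendsto_const_nhds (x := A ⊥)).div_atTop hpt
      have h4 := h3.add h2
      have h5 : 0 + 2 * (((k + 1 + 1 : ℕ) : ℤ) / 2 * a) / ((k : ℝ) + 2) = a := by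
        push_cast; field_simp; ring
      rw [h5] at h4
      refine h4.congr fun n => ?_
      rw [hEx, add_div]

/-- L2 convergence gives L1 convergence -/
lemma Obs.l1 {k : ℕ} {a : ℝ} {A : YoungDiagram → ℝ} (h : Obs (k : ℤ) a A) :
    Tendsto (fun n => Ex n (fun μ => |A μ / sg n ^ k - a|)) atTop (𝓝 0) := by
  have h1 := h.asymp
  have h2 : Tendsto (fun n => Ex n (fun μ => A μ * A μ) / sg n ^ (k + k)) atTop (𝓝 (a * a)) :=
    ((h.mul h).cast (v := ((k + k : ℕ) : ℤ)) (by push_cast; ring) rfl (fun _ => rfl)).asymp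
  have h3 : Tendsto (fun n => Ex n (fun μ => (A μ / sg n ^ k - a) ^ 2)) atTop (𝓝 0) := by
    have h4 := (h2.sub (h1.const_mul (2 * a))).add_const (a ^ 2)
    have h5 : a * a - 2 * a * a + a ^ 2 = 0 := by ring
    rw [h5] at h4
    refine h4.congr fun n => ?_
    have hs := (sg_pos n).ne'
    have e : Ex n (fun μ => (A μ / sg n ^ k - a) ^ 2) =
        Ex n (fun μ => (1 / sg n ^ (k + k)) * (A μ * A μ) + ((-(2 * a) / sg n ^ k) * A μ + a ^ 2)) := by
      refine Ex_congr n fun μ _ => ?_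
      rw [pow_add]; field_simp; ring
    rw [e, Ex_add n (fun μ => (1 / sg n ^ (k + k)) * (A μ * A μ))
      (fun μ => ((-(2 * a) / sg n ^ k) * A μ + a ^ 2)),
      Ex_add n (fun μ => ((-(2 * a) / sg n ^ k) * A μ)), Ex_smul, Ex_smul, Ex_const]
    ring
  have hb : ∀ δ : ℝ, 0 < δ → ∀ n, Ex n (fun μ => |A μ / sg n ^ k - a|) ≤
      δ + δ⁻¹ * Ex n (fun μ => (A μ / sg n ^ k - a) ^ 2) := by
    intro δ hδ n
    rw [← Ex_smul, ← Ex_const n δ, ← Ex_add, Ex_const n δ]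
    refine Ex_mono n fun μ _ => ?_
    set y := A μ / sg n ^ k - a
    have h6 : δ + δ⁻¹ * y ^ 2 - |y| = δ⁻¹ * ((|y| - δ / 2) ^ 2 + 3 / 4 * δ ^ 2) := by
      rw [← sq_abs y]; field_simp; ring
    have h7 : 0 ≤ δ⁻¹ * ((|y| - δ / 2) ^ 2 + 3 / 4 * δ ^ 2) := by positivity
    linarith
  rw [Metric.tendsto_atTop]
  intro ε hε
  obtain ⟨N, hN⟩ := Metric.tendsto_atTop.1 h3 (ε / 2 * (ε / 4)) (by positivity)
  refine ⟨N, fun n hn => ?_⟩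
  have h8 := hN n hn
  rw [Real.dist_eq, sub_zero] at h8 ⊢
  rw [abs_of_nonneg (Ex_nonneg n fun μ _ => abs_nonneg _)]
  have h9 := (abs_lt.1 h8).2
  have h10 := hb (ε / 2) (by positivity) n
  have h11 : (ε / 2)⁻¹ * Ex n (fun μ => (A μ / sg n ^ k - a) ^ 2) < (ε / 2)⁻¹ * (ε / 2 * (ε / 4)) := by
    gcongr
  rw [inv_mul_cancel_left₀ (by positivity)] at h11
  linarith

lemma Mom_l1 (k : ℕ) : Tendsto (fun n => Ex n (fun μ => |Mom k μ / sg n ^ k - mm k|)) atTop (𝓝 0) :=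
  (Obs.mom k).l1

lemma psum_l1 (k : ℕ) : Tendsto (fun n => Ex n (fun μ => |psum k μ / sg n ^ (k + 2) -
    2 * mm k / (k + 2)|)) atTop (𝓝 0) :=
  ((Obs.ps k).cast (v := ((k + 2 : ℕ) : ℤ)) (by push_cast; ring) rfl (fun _ => rfl)).l1

end AsympSection

section MeasureSection
open MeasureTheory Filter Finset
open scoped Topology

lemma mem_of_le {μ : YoungDiagram} {s : SYT μ} {t : ℕ → ℕ → ℕ} (ht : IsInfYT t)
    (hs : t ∈ cylEvent μ s) {c : ℕ × ℕ} (hc : t c.1 c.2 ≤ μ.card) : c ∈ μ := by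
  obtain ⟨d, hd, hd'⟩ := s.surj _ (ht.1 c.1 c.2) hc
  obtain ⟨e, _, he⟩ := ht.2.1 _ (ht.1 c.1 c.2)
  have h1 : c = e := he c rfl
  have h2 : d = e := he d (by
    show t d.1 d.2 = _
    rw [hs d.1 d.2 hd, hd'])
  rw [h1, ← h2]; exact hd

lemma exists_addable {μ : YoungDiagram} {s : SYT μ} {t : ℕ → ℕ → ℕ} (ht : IsInfYT t)
    (hs : t ∈ cylEvent μ s) : ∃ i, Addable μ i ∧ t i (μ.rowLen i) = μ.card + 1 := by
  obtain ⟨⟨i, j⟩, hc, -⟩ := ht.2.1 (μ.card + 1) (by omega)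
  simp only at hc
  have hnot : (i, j) ∉ μ := by
    intro h
    have h1 := hs i j h
    have h2 := s.le_card i j
    omega
  have hj : j = μ.rowLen i := by
    rw [YoungDiagram.mem_iff_lt_rowLen] at hnot
    rcases j with _ | j
    · omega
    · have h1 := ht.2.2.1 i j
      have h2 : (i, j) ∈ μ := mem_of_le ht hs (by simp only; omega)
      rw [YoungDiagram.mem_iff_lt_rowLen] at h2
      omega
  subst hj
  refine ⟨i, ?_, hc⟩
  intro i' hi'
  rcases i with _ | i
  · omega
  · have h1 := ht.2.2.2 i (μ.rowLen (i + 1))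
    have h2 : (i, μ.rowLen (i + 1)) ∈ μ := mem_of_le ht hs (by simp only; omega)
    rw [YoungDiagram.mem_iff_lt_rowLen] at h2
    have := μ.rowLen_anti i' i (by omega)
    omega

lemma entryPos_eq {t : ℕ → ℕ → ℕ} (ht : IsInfYT t) {n : ℕ} {c : ℕ × ℕ} (hc : t c.1 c.2 = n) :
    entryPos t n = c := by
  have hn : 1 ≤ n := by rw [← hc]; exact ht.1 _ _
  have hex : ∃ c : ℕ × ℕ, t c.1 c.2 = n := ⟨c, hc⟩
  unfold entryPos
  rw [dif_pos hex]
  exact (ht.2.1 n hn).unique hex.choose_spec hc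

lemma meas_eval (i j : ℕ) : Measurable (fun t : ℕ → ℕ → ℕ => t i j) :=
  (measurable_pi_apply j).comp (measurable_pi_apply i)

lemma mfa {α ι : Type*} [MeasurableSpace α] [Countable ι] {p : ι → α → Prop}
    (h : ∀ i, MeasurableSet {a | p i a}) : MeasurableSet {a | ∀ i, p i a} := by
  have : {a | ∀ i, p i a} = ⋂ i, {a | p i a} := by ext a; simp
  rw [this]; exact MeasurableSet.iInter h

lemma mex {α ι : Type*} [MeasurableSpace α] [Countable ι] {p : ι → α → Prop}
    (h : ∀ i, MeasurableSet {a | p i a}) : MeasurableSet {a | ∃ i, p i a} := by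
  have : {a | ∃ i, p i a} = ⋃ i, {a | p i a} := by ext a; simp
  rw [this]; exact MeasurableSet.iUnion h

lemma mimp {α : Type*} [MeasurableSpace α] {p q : α → Prop}
    (h : MeasurableSet {a | p a}) (h' : MeasurableSet {a | q a}) :
    MeasurableSet {a | p a → q a} := by
  have : {a | p a → q a} = {a | p a}ᶜ ∪ {a | q a} := by ext a; simp [imp_iff_not_or]
  rw [this]; exact h.compl.union h'

lemma meas_IsInfYT : MeasurableSet {t : ℕ → ℕ → ℕ | IsInfYT t} := by
  have h1 : ∀ (c : ℕ × ℕ) (n : ℕ), MeasurableSet {t : ℕ → ℕ → ℕ | t c.1 c.2 = n} := fun c n =>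
    (meas_eval c.1 c.2) (measurableSet_singleton n)
  unfold IsInfYT
  refine MeasurableSet.inter ?_ (MeasurableSet.inter ?_ (MeasurableSet.inter ?_ ?_))
  · exact mfa fun i => mfa fun j =>
      measurableSet_le measurable_const (meas_eval i j)
  · refine mfa fun n => mimp (MeasurableSet.const _) ?_
    refine mex fun c => MeasurableSet.inter (h1 c n) ?_
    exact mfa fun c' => mimp (h1 c' n) (MeasurableSet.const _)
  · exact mfa fun i => mfa fun j =>
      measurableSet_lt (meas_eval i j) (meas_eval i (j + 1))
  · exact mfa fun i => mfa fun j =>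
      measurableSet_lt (meas_eval i j) (meas_eval (i + 1) j)

lemma meas_cyl (μ : YoungDiagram) (s : SYT μ) : MeasurableSet (cylEvent μ s) := by
  unfold cylEvent
  refine mfa fun i => mfa fun j => ?_
  exact mimp (MeasurableSet.const _) ((meas_eval i j) (measurableSet_singleton _))

def cylx (μ : YoungDiagram) (s : SYT μ) (i : ℕ) : Set (ℕ → ℕ → ℕ) :=
  {t | IsInfYT t ∧ t ∈ cylEvent μ s ∧ t i (μ.rowLen i) = μ.card + 1}

lemma meas_cylx (μ : YoungDiagram) (s : SYT μ) (i : ℕ) : MeasurableSet (cylx μ s i) :=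
  meas_IsInfYT.inter ((meas_cyl μ s).inter ((meas_eval i _) (measurableSet_singleton _)))

lemma cylx_eq {μ : YoungDiagram} (s : SYT μ) {i : ℕ} (h : Addable μ i) :
    cylx μ s i = {t | IsInfYT t} ∩ cylEvent (addCell μ i) (s.extend h) := by
  ext t
  constructor
  · rintro ⟨h1, h2, h3⟩
    refine ⟨h1, fun a b hab => ?_⟩
    show _ = if (a, b) = (i, μ.rowLen i) then μ.card + 1 else s.entry a b
    split_ifs with hc
    · rw [Prod.mk.injEq] at hc
      rw [hc.1, hc.2, h3]
    · rw [mem_addCell h] at hab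
      exact h2 a b (hab.resolve_left hc)
  · rintro ⟨h1, h2⟩
    refine ⟨h1, fun a b hab => ?_, ?_⟩
    · have := h2 a b ((mem_addCell h _).2 (Or.inr hab))
      rw [this]
      show (if (a, b) = (i, μ.rowLen i) then μ.card + 1 else s.entry a b) = _
      rw [if_neg]
      intro hc
      rw [hc] at hab
      exact new_notMem μ i hab
    · have := h2 i (μ.rowLen i) ((mem_addCell h _).2 (Or.inl rfl))
      rw [this]
      show (if (i, μ.rowLen i) = (i, μ.rowLen i) then μ.card + 1 else s.entry i (μ.rowLen i)) = _
      rw [if_pos rfl]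

variable {P : Measure (ℕ → ℕ → ℕ)}

lemma ae_inf (hP : PlancherelLike P) : ∀ᵐ t ∂P, IsInfYT t := by
  have := hP.1
  exact (prob_compl_eq_zero_iff meas_IsInfYT).2 hP.2.1

lemma cylx_ae (hP : PlancherelLike P) {μ : YoungDiagram} (s : SYT μ) {i : ℕ} (h : Addable μ i) :
    cylx μ s i =ᵐ[P] cylEvent (addCell μ i) (s.extend h) := by
  rw [cylx_eq s h]
  filter_upwards [ae_inf hP] with t ht
  apply propext
  exact ⟨fun h => h.2, fun h => ⟨ht, h⟩⟩

lemma cyl_prob (hP : PlancherelLike P) {μ : YoungDiagram} (s : SYT μ) :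
    (P (cylEvent μ s)).toReal = (fSYT μ : ℝ) / (Nat.factorial μ.card) := by
  rw [hP.2.2, ENNReal.toReal_ofReal (by positivity)]

lemma cyl_prob_ext (hP : PlancherelLike P) {μ : YoungDiagram} (s : SYT μ) {i : ℕ} (h : Addable μ i) :
    (P (cylEvent (addCell μ i) (s.extend h))).toReal = (P (cylEvent μ s)).toReal * tp μ i := by
  rw [cyl_prob hP, cyl_prob hP]
  unfold tp
  rw [if_pos h, addCell_card h, Nat.factorial_succ]
  have h1 : (fSYT μ : ℝ) ≠ 0 := by exact_mod_cast (fSYT_pos μ).ne'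
  have h2 : (Nat.factorial μ.card : ℝ) ≠ 0 := by positivity
  push_cast
  field_simp

open Classical in
lemma cyl_step (hP : PlancherelLike P) {μ : YoungDiagram} (s : SYT μ) (F : (ℕ → ℕ → ℕ) → ℝ)
    (v : ℕ → ℝ)
    (hF : ∀ i (h : Addable μ i), IntegrableOn F (cylEvent (addCell μ i) (s.extend h)) P ∧
      ∫ t in cylEvent (addCell μ i) (s.extend h), F t ∂P =
        (P (cylEvent (addCell μ i) (s.extend h))).toReal * v i) :
    IntegrableOn F (cylEvent μ s) P ∧
      ∫ t in cylEvent μ s, F t ∂P = (P (cylEvent μ s)).toReal * ∑ i ∈ range (μ.card + 1), tp μ i * v i := by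
  set I := (range (μ.card + 1)).filter (fun i => Addable μ i) with hI
  have hae : cylEvent μ s =ᵐ[P] ⋃ i ∈ I, cylx μ s i := by
    filter_upwards [ae_inf hP] with t ht
    apply propext
    constructor
    · intro h
      obtain ⟨i, hi, hi'⟩ := exists_addable ht h
      refine Set.mem_iUnion₂.2 ⟨i, ?_, ht, h, hi'⟩
      rw [hI, mem_filter, mem_range]
      exact ⟨addable_lt hi, hi⟩
    · intro h
      obtain ⟨i, _, _, h, _⟩ := Set.mem_iUnion₂.1 h
      exact h
  have hintg : ∀ i ∈ I, IntegrableOn F (cylx μ s i) P := by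
    intro i hi
    rw [hI, mem_filter] at hi
    exact (hF i hi.2).1.congr_set_ae (cylx_ae hP s hi.2)
  refine ⟨?_, ?_⟩
  · refine IntegrableOn.congr_set_ae ?_ hae
    rw [integrableOn_finset_iUnion]
    exact hintg
  · rw [setIntegral_congr_set hae, integral_biUnion_finset I (fun i _ => meas_cylx μ s i) ?_ hintg]
    · have h1 : ∀ i ∈ I, ∫ t in cylx μ s i, F t ∂P = (P (cylEvent μ s)).toReal * (tp μ i * v i) := by
        intro i hi
        rw [hI, mem_filter] at hi
        rw [setIntegral_congr_set (cylx_ae hP s hi.2), (hF i hi.2).2, cyl_prob_ext hP]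
        ring
      rw [sum_congr rfl h1, ← mul_sum, hI, sum_filter]
      congr 1
      refine sum_congr rfl fun i _ => ?_
      split_ifs with h
      · rfl
      · unfold tp; rw [if_neg h]; simp
    · intro i _ j _ hij
      rw [Function.onFun, Set.disjoint_left]
      rintro t ⟨h1, h2, h3⟩ ⟨_, _, h4⟩
      apply hij
      have := (h1.2.1 (μ.card + 1) (by omega)).unique (y₁ := (i, μ.rowLen i)) (y₂ := (j, μ.rowLen j)) h3 h4
      exact (Prod.mk.injEq .. ▸ this).1

/-- one step operator -/
noncomputable def Tstep (A : YoungDiagram → ℝ) : YoungDiagram → ℝ := TT (fun μ i => A (addCell μ i))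

lemma Ex_eq_iter : ∀ (n : ℕ) (A : YoungDiagram → ℝ), Ex n A = (Tstep^[n] A) ⊥
  | 0, A => rfl
  | n + 1, A => by rw [Ex_succ, Ex_eq_iter n]; rfl

lemma cyl_integral (hP : PlancherelLike P) (Φ : ℕ × ℕ → ℝ) : ∀ (k : ℕ) {μ : YoungDiagram} (s : SYT μ),
    IntegrableOn (fun t => Φ (entryPos t (μ.card + k + 1))) (cylEvent μ s) P ∧
    ∫ t in cylEvent μ s, Φ (entryPos t (μ.card + k + 1)) ∂P = (P (cylEvent μ s)).toReal *
      (Tstep^[k] (TT (fun μ i => Φ (i, μ.rowLen i)))) μ := by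
  have := hP.1
  intro k
  induction k with
  | zero =>
    intro μ s
    refine cyl_step hP s (fun t => Φ (entryPos t (μ.card + 0 + 1))) (fun i => Φ (i, μ.rowLen i)) ?_
    intro i h
    have hae : ∀ᵐ t ∂(P.restrict (cylEvent (addCell μ i) (s.extend h))),
        Φ (i, μ.rowLen i) = Φ (entryPos t (μ.card + 0 + 1)) := by
      rw [ae_restrict_iff' (meas_cyl _ _)]
      filter_upwards [ae_inf hP] with t ht hm
      rw [entryPos_eq ht (c := (i, μ.rowLen i))]
      have : t ∈ cylx μ s i := by rw [cylx_eq s h]; exact ⟨ht, hm⟩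
      exact this.2.2
    constructor
    · exact Integrable.congr (integrable_const _) hae
    · rw [← integral_congr_ae hae, integral_const]
      simp [Measure.real]
  | succ k ih =>
    intro μ s
    have := cyl_step hP s (fun t => Φ (entryPos t (μ.card + (k + 1) + 1)))
      (fun i => (Tstep^[k] (TT (fun μ i => Φ (i, μ.rowLen i)))) (addCell μ i)) (by
        intro i h
        have := ih (s.extend h)
        rw [addCell_card h, show μ.card + 1 + k + 1 = μ.card + (k + 1) + 1 by ring] at this
        exact this)
    rw [Function.iterate_succ_apply']
    exact this

lemma integral_entryPos (hP : PlancherelLike P) (Φ : ℕ × ℕ → ℝ) (n : ℕ) :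
    ∫ t, Φ (entryPos t (n + 1)) ∂P = Ex n (TT (fun μ i => Φ (i, μ.rowLen i))) := by
  have := hP.1
  have h1 := (cyl_integral hP Φ n emptySYT).2
  have h2 : cylEvent ⊥ emptySYT = Set.univ := by
    ext t
    simp [cylEvent]
  rw [h2, card_bot, zero_add, ← Ex_eq_iter] at h1
  simpa using h1

end MeasureSection

section AnalysisSection
open MeasureTheory Filter Finset
open scoped Topology

lemma hasDeriv_sqrt4 {x : ℝ} (hx : x ∈ Set.Ioo (-2 : ℝ) 2) :
    HasDerivAt (fun x : ℝ => Real.sqrt (4 - x ^ 2)) (-x / Real.sqrt (4 - x ^ 2)) x := by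
  have h1 : 0 < 4 - x ^ 2 := by nlinarith [hx.1, hx.2]
  have h2 : HasDerivAt (fun x : ℝ => 4 - x ^ 2) (-(2 * x)) x := by
    simpa using (hasDerivAt_pow 2 x).const_sub 4
  convert h2.sqrt h1.ne' using 1
  have := (Real.sqrt_pos.2 h1).ne'
  field_simp

lemma hasDeriv_32 {x : ℝ} (hx : x ∈ Set.Ioo (-2 : ℝ) 2) :
    HasDerivAt (fun x : ℝ => (4 - x ^ 2) * Real.sqrt (4 - x ^ 2)) (-3 * x * Real.sqrt (4 - x ^ 2)) x := by
  have h1 : 0 < 4 - x ^ 2 := by nlinarith [hx.1, hx.2]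
  have h2 : HasDerivAt (fun x : ℝ => 4 - x ^ 2) (-(2 * x)) x := by
    simpa using (hasDerivAt_pow 2 x).const_sub 4
  refine (h2.mul (hasDeriv_sqrt4 hx)).congr_deriv ?_
  have h3 := (Real.sqrt_pos.2 h1).ne'
  field_simp
  rw [Real.sq_sqrt h1.le]; ring

lemma cont_sqrt4 : Continuous (fun x : ℝ => Real.sqrt (4 - x ^ 2)) := by fun_prop

noncomputable def JJ (k : ℕ) : ℝ := ∫ x in (-2 : ℝ)..2, x ^ k * Real.sqrt (4 - x ^ 2)

lemma JJ_zero : JJ 0 = 2 * Real.pi := by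
  have h1 := integral_sqrt_one_sub_sq
  have h2 : ∫ x in (-1 : ℝ)..1, Real.sqrt (4 - (2 * x) ^ 2) = Real.pi := by
    have : ∀ x : ℝ, Real.sqrt (4 - (2 * x) ^ 2) = 2 * Real.sqrt (1 - x ^ 2) := by
      intro x
      rw [show 4 - (2 * x) ^ 2 = 2 ^ 2 * (1 - x ^ 2) by ring, Real.sqrt_mul (by norm_num),
        Real.sqrt_sq (by norm_num)]
    simp only [this]
    rw [intervalIntegral.integral_const_mul, h1]; ring
  rw [intervalIntegral.integral_comp_mul_left (fun x => Real.sqrt (4 - x ^ 2)) (by norm_num : (2 : ℝ) ≠ 0)] at h2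
  norm_num at h2
  unfold JJ
  simp only [pow_zero, one_mul]
  linarith

lemma JJ_one : JJ 1 = 0 := by
  have h := intervalIntegral.integral_eq_sub_of_hasDerivAt_of_le (a := (-2 : ℝ)) (b := 2) (by norm_num)
    (f := fun x : ℝ => (4 - x ^ 2) * Real.sqrt (4 - x ^ 2)) (f' := fun x => -3 * x * Real.sqrt (4 - x ^ 2))
    (by fun_prop) (fun x hx => hasDeriv_32 hx) (Continuous.intervalIntegrable (by fun_prop) _ _)
  norm_num at h
  unfold JJ
  simp only [pow_one]
  have h2 : ∀ x : ℝ, -(3 * x * Real.sqrt (4 - x ^ 2)) = (-3) * (x * Real.sqrt (4 - x ^ 2)) := fun x => by ring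
  simp only [mul_assoc] at h
  rw [intervalIntegral.integral_const_mul] at h
  linarith

lemma JJ_rec (k : ℕ) : ((k : ℝ) + 4) * JJ (k + 2) = 4 * (k + 1) * JJ k := by
  have h := intervalIntegral.integral_eq_sub_of_hasDerivAt_of_le (a := (-2 : ℝ)) (b := 2) (by norm_num)
    (f := fun x : ℝ => x ^ (k + 1) * ((4 - x ^ 2) * Real.sqrt (4 - x ^ 2)))
    (f' := fun x => 4 * (k + 1) * (x ^ k * Real.sqrt (4 - x ^ 2)) -
      ((k : ℝ) + 4) * (x ^ (k + 2) * Real.sqrt (4 - x ^ 2)))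
    (by fun_prop) (fun x hx => by
      refine ((hasDerivAt_pow (k + 1) x).mul (hasDeriv_32 hx)).congr_deriv ?_
      push_cast
      ring) (Continuous.intervalIntegrable (by fun_prop) _ _)
  rw [intervalIntegral.integral_sub (Continuous.intervalIntegrable (by fun_prop) _ _)
    (Continuous.intervalIntegrable (by fun_prop) _ _), intervalIntegral.integral_const_mul,
    intervalIntegral.integral_const_mul] at h
  norm_num at h
  unfold JJ
  linarith

lemma JJ_eq : ∀ k : ℕ, JJ k = 2 * Real.pi * mm k
  | 0 => by rw [JJ_zero, mm_zero, mul_one]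
  | 1 => by rw [JJ_one, mm_one, mul_zero]
  | k + 2 => by
    have h1 := JJ_rec k
    have h2 := mm_rec k
    rw [JJ_eq k] at h1
    have h3 : (k : ℝ) + 4 ≠ 0 := by positivity
    apply mul_left_cancel₀ h3
    rw [h1]
    linear_combination (-2 * Real.pi) * h2

/-- semicircle density -/
noncomputable def scd (x : ℝ) : ℝ := Real.sqrt (4 - x ^ 2) / (2 * Real.pi)

lemma cont_scd : Continuous scd := by unfold scd; fun_prop

lemma scd_moment (k : ℕ) : ∫ x in (-2 : ℝ)..2, x ^ k * scd x = mm k := by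
  have h := JJ_eq k
  unfold JJ at h
  unfold scd
  simp only [← mul_div_assoc]
  rw [intervalIntegral.integral_div, h]
  field_simp

lemma Omega_eq {x : ℝ} (hx : x ∈ Set.Icc (-2 : ℝ) 2) : Omegastar x =
    (2 / Real.pi) * (x * Real.arcsin (x / 2) + Real.sqrt (4 - x ^ 2)) := by
  unfold Omegastar
  rw [if_pos (abs_le.2 hx)]

lemma cont_Omega : Continuous Omegastar := by
  unfold Omegastar
  refine Continuous.if_le ?_ continuous_abs continuous_abs continuous_const ?_
  · have := Real.continuous_arcsin
    fun_prop
  · intro x hx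
    have h4 : x ^ 2 = 4 := by rw [← sq_abs, hx]; norm_num
    rw [h4]
    rcases abs_cases x with ⟨h, _⟩ | ⟨h, _⟩
    · have : x = 2 := by linarith
      subst this
      norm_num [Real.arcsin_one]
      field_simp
    · have : x = -2 := by linarith
      subst this
      norm_num [Real.arcsin_neg_one]
      field_simp

/-- half height of the limit shape over the axes -/
noncomputable def hsh (x : ℝ) : ℝ := (Omegastar x - |x|) / 2

lemma cont_hsh : Continuous hsh := by
  have := cont_Omega
  unfold hsh; fun_prop

lemma hasDeriv_Omega {x : ℝ} (hx : x ∈ Set.Ioo (-2 : ℝ) 2) :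
    HasDerivAt Omegastar ((2 / Real.pi) * Real.arcsin (x / 2)) x := by
  have h1 : 0 < 4 - x ^ 2 := by nlinarith [hx.1, hx.2]
  have h0 : HasDerivAt (fun x : ℝ => Real.arcsin (x / 2)) (1 / Real.sqrt (4 - x ^ 2)) x := by
    have h2 : HasDerivAt (fun x : ℝ => x / 2) (1 / 2) x := (hasDerivAt_id x).div_const 2
    have h3 := (Real.hasDerivAt_arcsin (x := x / 2) (by intro h; have := hx.1; linarith)
      (by intro h; have := hx.2; linarith)).comp x h2
    refine h3.congr_deriv ?_
    have : Real.sqrt (4 - x ^ 2) = 2 * Real.sqrt (1 - (x / 2) ^ 2) := by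
      rw [show 4 - x ^ 2 = 2 ^ 2 * (1 - (x / 2) ^ 2) by ring, Real.sqrt_mul (by norm_num),
        Real.sqrt_sq (by norm_num)]
    rw [this]
    field_simp
  have h4 : HasDerivAt (fun x : ℝ => (2 / Real.pi) * (x * Real.arcsin (x / 2) + Real.sqrt (4 - x ^ 2)))
      ((2 / Real.pi) * Real.arcsin (x / 2)) x := by
    have := (((hasDerivAt_id x).mul h0).add (hasDeriv_sqrt4 hx)).const_mul (2 / Real.pi)
    refine this.congr_deriv ?_
    simp only [id]
    ring
  refine h4.congr_of_eventuallyEq ?_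
  filter_upwards [Ioo_mem_nhds hx.1 hx.2] with y hy
  exact Omega_eq ⟨hy.1.le, hy.2.le⟩

lemma Omega_two : Omegastar 2 = 2 := by
  rw [Omega_eq (by norm_num)]
  norm_num [Real.arcsin_one]
  field_simp

lemma Omega_neg_two : Omegastar (-2) = 2 := by
  rw [Omega_eq (by norm_num)]
  norm_num [Real.arcsin_neg_one]
  field_simp

lemma hsh_moment (k : ℕ) : ∫ x in (-2 : ℝ)..2, x ^ k * hsh x = 2 * mm k / (k + 2) := by
  have hcO := cont_Omega
  have hch := cont_hsh
  have h := MeasureTheory.integral_eq_of_hasDerivAt_off_countable_of_le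
    (fun x : ℝ => x ^ (k + 1) * (Omegastar x - |x|))
    (fun x => 2 * (k + 2) * (x ^ k * hsh x) - (2 / Real.pi) * (x ^ k * Real.sqrt (4 - x ^ 2)))
    (a := (-2 : ℝ)) (b := 2) (by norm_num) (s := {0}) (Set.countable_singleton _)
    (by fun_prop) (by
      rintro x ⟨hx, hx0⟩
      have hx0 : x ≠ 0 := hx0
      have habs : ∃ e : ℝ, HasDerivAt (fun x : ℝ => |x|) e x ∧ x * e = |x| := by
        rcases lt_or_gt_of_ne hx0 with h | h
        · exact ⟨-1, hasDerivAt_abs_neg h, by rw [abs_of_neg h]; ring⟩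
        · exact ⟨1, hasDerivAt_abs_pos h, by rw [abs_of_pos h]; ring⟩
      obtain ⟨e, he, he'⟩ := habs
      have := (hasDerivAt_pow (k + 1) x).mul ((hasDeriv_Omega hx).sub he)
      refine this.congr_deriv ?_
      unfold hsh
      rw [show (Omegastar - fun x : ℝ => |x|) x = Omegastar x - |x| from rfl, ← he', Omega_eq ⟨hx.1.le, hx.2.le⟩]
      push_cast
      ring)
    (Continuous.intervalIntegrable (by fun_prop) _ _)
  rw [intervalIntegral.integral_sub (Continuous.intervalIntegrable (by fun_prop) _ _)
    (Continuous.intervalIntegrable (by fun_prop) _ _), intervalIntegral.integral_const_mul,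
    intervalIntegral.integral_const_mul, Omega_two, Omega_neg_two] at h
  have hJ := JJ_eq k
  unfold JJ at hJ
  rw [hJ] at h
  norm_num at h
  have h3 : (k : ℝ) + 2 ≠ 0 := by positivity
  field_simp at h ⊢
  linarith

lemma poly_bound (q : Polynomial ℝ) : ∃ (D : ℝ) (d : ℕ), 0 ≤ D ∧ ∀ x : ℝ, 1 ≤ |x| → |q.eval x| ≤ D * |x| ^ d := by
  refine ⟨∑ i ∈ range (q.natDegree + 1), |q.coeff i|, q.natDegree, sum_nonneg fun _ _ => abs_nonneg _, ?_⟩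
  intro x hx
  rw [Polynomial.eval_eq_sum_range, sum_mul]
  refine (abs_sum_le_sum_abs _ _).trans (sum_le_sum fun i hi => ?_)
  rw [abs_mul, abs_pow]
  rw [mem_range] at hi
  have : |x| ^ i ≤ |x| ^ q.natDegree := pow_le_pow_right₀ hx (by omega)
  gcongr

lemma approx (φ : ℝ → ℝ) (hφ : Continuous φ) (C : ℝ) (hC : ∀ x, |φ x| ≤ C) (ε : ℝ) (hε : 0 < ε) :
    ∃ q b : Polynomial ℝ, (∀ x, |φ x - q.eval x| ≤ b.eval x) ∧
      ∀ x ∈ Set.Icc (-2 : ℝ) 2, b.eval x ≤ ε := by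
  obtain ⟨q, hq⟩ := exists_polynomial_near_of_continuousOn (-3) 3 φ hφ.continuousOn (ε / 2) (by positivity)
  obtain ⟨D, d, hD, hqD⟩ := poly_bound q
  have hC0 : 0 ≤ C := (abs_nonneg _).trans (hC 0)
  set E := (C + D) * 3 ^ d with hE
  have hE0 : 0 ≤ E := by positivity
  have hlim : Tendsto (fun r : ℕ => E * (4 / 9 : ℝ) ^ r) atTop (𝓝 (E * 0)) :=
    (tendsto_pow_atTop_nhds_zero_of_lt_one (by norm_num) (by norm_num)).const_mul E
  rw [mul_zero] at hlim
  obtain ⟨r, hr1, hr2⟩ := ((hlim.eventually_lt_const (show 0 < ε / 2 by positivity)).and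
    (eventually_ge_atTop d)).exists
  refine ⟨q, Polynomial.C (ε / 2) + Polynomial.C (E / 9 ^ r) * Polynomial.X ^ (2 * r), ?_, ?_⟩
  · intro x
    have hev : (Polynomial.C (ε / 2) + Polynomial.C (E / 9 ^ r) * Polynomial.X ^ (2 * r)).eval x =
        ε / 2 + E * (|x| / 3) ^ (2 * r) := by
      simp only [Polynomial.eval_add, Polynomial.eval_C, Polynomial.eval_mul, Polynomial.eval_pow,
        Polynomial.eval_X]
      rw [pow_mul, pow_mul, div_pow, sq_abs, div_pow]
      norm_num
      ring
    rw [hev]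
    by_cases hx : |x| ≤ 3
    · have h1 := hq x (abs_le.1 hx)
      rw [abs_sub_comm] at h1
      have : 0 ≤ E * (|x| / 3) ^ (2 * r) := by positivity
      linarith
    · rw [not_le] at hx
      have h1 := hqD x (by linarith)
      have h2 : |φ x - q.eval x| ≤ C + D * |x| ^ d :=
        (abs_sub _ _).trans (add_le_add (hC x) h1)
      have h3 : 1 ≤ |x| ^ d := one_le_pow₀ (by linarith)
      have h4 : C ≤ C * |x| ^ d := le_mul_of_one_le_right hC0 h3
      have h5 : (C + D) * |x| ^ d = E * (|x| / 3) ^ d := by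
        rw [hE, div_pow]; field_simp
      have h6 : (|x| / 3) ^ d ≤ (|x| / 3) ^ (2 * r) :=
        pow_le_pow_right₀ (by linarith) (by omega)
      have h7 : E * (|x| / 3) ^ d ≤ E * (|x| / 3) ^ (2 * r) := by gcongr
      linarith
  · intro x hx
    simp only [Polynomial.eval_add, Polynomial.eval_C, Polynomial.eval_mul, Polynomial.eval_pow,
      Polynomial.eval_X]
    have h1 : x ^ 2 ≤ 4 := by nlinarith [hx.1, hx.2]
    have h2 : E / 9 ^ r * x ^ (2 * r) ≤ E * (4 / 9) ^ r := by
      rw [pow_mul]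
      calc E / 9 ^ r * (x ^ 2) ^ r ≤ E / 9 ^ r * 4 ^ r := by gcongr
        _ = _ := by rw [div_pow]; ring
    linarith

end AnalysisSection

section MomentMethod
open MeasureTheory Filter Finset
open scoped Topology

lemma tendsto_zero_eps {u : ℕ → ℝ} (h0 : ∀ n, 0 ≤ u n) (h : ∀ ε > 0, ∀ᶠ n in atTop, u n ≤ ε) :
    Tendsto u atTop (𝓝 0) := by
  rw [Metric.tendsto_atTop']
  intro ε hε
  obtain ⟨N, hN⟩ := eventually_atTop.1 (h (ε / 2) (by positivity))
  refine ⟨N, fun n hn => ?_⟩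
  rw [Real.dist_eq, sub_zero, abs_of_nonneg (h0 n)]
  have := hN n hn.le
  linarith

lemma ev_le {u : ℕ → ℝ} (h : Tendsto u atTop (𝓝 0)) {ε : ℝ} (hε : 0 < ε) : ∀ᶠ n in atTop, u n ≤ ε :=
  (h.eventually_lt_const hε).mono fun _ h => h.le

noncomputable def wsum {ι : Type*} (s : Finset ι) (w p : ι → ℝ) : (ℝ → ℝ) →ₗ[ℝ] ℝ where
  toFun φ := ∑ i ∈ s, w i * φ (p i)
  map_add' φ ψ := by
    rw [← sum_add_distrib]; exact sum_congr rfl fun i _ => by rw [Pi.add_apply]; ring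
  map_smul' r φ := by
    rw [RingHom.id_apply, smul_eq_mul, mul_sum]
    exact sum_congr rfl fun i _ => by rw [Pi.smul_apply, smul_eq_mul]; ring

lemma wsum_nonneg {ι : Type*} (s : Finset ι) (w p : ι → ℝ) (hw : ∀ i, 0 ≤ w i) (φ : ℝ → ℝ)
    (h : ∀ x, 0 ≤ φ x) : 0 ≤ wsum s w p φ :=
  sum_nonneg fun i _ => mul_nonneg (hw i) (h _)

lemma mom_poly (S : ℕ → YoungDiagram → (ℝ → ℝ) →ₗ[ℝ] ℝ) (ρ : ℝ → ℝ) (hρ : Continuous ρ)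
    (hS : ∀ k : ℕ, Tendsto (fun n => Ex n (fun μ => |S n μ (fun x => x ^ k) -
      ∫ x in (-2 : ℝ)..2, x ^ k * ρ x|)) atTop (𝓝 0)) (q : Polynomial ℝ) :
    Tendsto (fun n => Ex n (fun μ => |S n μ (fun x => q.eval x) -
      ∫ x in (-2 : ℝ)..2, q.eval x * ρ x|)) atTop (𝓝 0) := by
  induction q using Polynomial.induction_on' with
  | add p q hp hq =>
    have h1 := hp.add hq
    rw [add_zero] at h1
    refine squeeze_zero (fun n => Ex_nonneg n fun μ _ => abs_nonneg _) (fun n => ?_) h1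
    rw [← Ex_add]
    refine Ex_mono n fun μ _ => ?_
    have e1 : (fun x => (p + q).eval x) = (fun x => p.eval x) + (fun x => q.eval x) := by
      ext x; simp
    have e2 : ∫ x in (-2 : ℝ)..2, (p + q).eval x * ρ x = (∫ x in (-2 : ℝ)..2, p.eval x * ρ x) +
        ∫ x in (-2 : ℝ)..2, q.eval x * ρ x := by
      rw [← intervalIntegral.integral_add (Continuous.intervalIntegrable (by fun_prop) _ _)
        (Continuous.intervalIntegrable (by fun_prop) _ _)]
      simp only [Polynomial.eval_add, add_mul]
    rw [e1, e2, map_add, add_sub_add_comm]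
    exact abs_add_le _ _
  | monomial k a =>
    have h1 := (hS k).const_mul |a|
    rw [mul_zero] at h1
    refine h1.congr fun n => ?_
    rw [← Ex_smul]
    refine Ex_congr n fun μ _ => ?_
    have e1 : (fun x => (Polynomial.monomial k a).eval x) = a • (fun x : ℝ => x ^ k) := by
      ext x; simp
    have e2 : ∫ x in (-2 : ℝ)..2, (Polynomial.monomial k a).eval x * ρ x =
        a * ∫ x in (-2 : ℝ)..2, x ^ k * ρ x := by
      rw [← intervalIntegral.integral_const_mul]
      simp only [Polynomial.eval_monomial, mul_assoc]
    rw [e1, e2, map_smul, smul_eq_mul, ← mul_sub, abs_mul]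

lemma mom_method (S : ℕ → YoungDiagram → (ℝ → ℝ) →ₗ[ℝ] ℝ)
    (hpos : ∀ n μ φ, (∀ x, 0 ≤ φ x) → 0 ≤ S n μ φ) (ρ : ℝ → ℝ) (hρ : Continuous ρ)
    (hS : ∀ k : ℕ, Tendsto (fun n => Ex n (fun μ => |S n μ (fun x => x ^ k) -
      ∫ x in (-2 : ℝ)..2, x ^ k * ρ x|)) atTop (𝓝 0))
    (φ : ℝ → ℝ) (hφ : Continuous φ) (C : ℝ) (hC : ∀ x, |φ x| ≤ C) :
    Tendsto (fun n => Ex n (fun μ => |S n μ φ - ∫ x in (-2 : ℝ)..2, φ x * ρ x|)) atTop (𝓝 0) := by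
  refine tendsto_zero_eps (fun n => Ex_nonneg n fun μ _ => abs_nonneg _) fun ε hε => ?_
  obtain ⟨M, hM⟩ := (isCompact_Icc (a := (-2 : ℝ)) (b := 2)).exists_bound_of_continuousOn hρ.continuousOn
  have hM0 : 0 ≤ M := (norm_nonneg _).trans (hM 0 (by norm_num))
  obtain ⟨q, b, hqb, hb⟩ := approx φ hφ C hC (ε / (16 * (M + 1))) (by positivity)
  have hI : ∀ ψ : ℝ → ℝ, (∀ x, |ψ x| ≤ b.eval x) → |∫ x in (-2 : ℝ)..2, ψ x * ρ x| ≤ ε / 4 := by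
    intro ψ hψ
    have := intervalIntegral.norm_integral_le_of_norm_le_const (a := (-2 : ℝ)) (b := 2)
      (f := fun x => ψ x * ρ x) (C := ε / (16 * (M + 1)) * (M + 1)) (by
        intro x hx
        rw [Set.uIoc_of_le (by norm_num)] at hx
        have hx' : x ∈ Set.Icc (-2 : ℝ) 2 := ⟨hx.1.le, hx.2⟩
        rw [norm_mul]
        have h1 : ‖ψ x‖ ≤ ε / (16 * (M + 1)) := (hψ x).trans (hb x hx')
        have h2 : ‖ρ x‖ ≤ M + 1 := (hM x hx').trans (by linarith)
        gcongr)
    rw [Real.norm_eq_abs] at this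
    refine this.trans (le_of_eq ?_)
    norm_num
    field_simp
    norm_num
  have hb0 : ∀ x, 0 ≤ b.eval x := fun x => (abs_nonneg _).trans (hqb x)
  have h1 := hI (fun x => b.eval x) (fun x => by rw [abs_of_nonneg (hb0 x)])
  have h2 := hI (fun x => φ x - q.eval x) hqb
  have h2' : ∫ x in (-2 : ℝ)..2, (φ x - q.eval x) * ρ x = (∫ x in (-2 : ℝ)..2, φ x * ρ x) -
      ∫ x in (-2 : ℝ)..2, q.eval x * ρ x := by
    rw [← intervalIntegral.integral_sub (Continuous.intervalIntegrable (by fun_prop) _ _)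
        (Continuous.intervalIntegrable (by fun_prop) _ _)]
    simp only [sub_mul]
  rw [h2'] at h2
  filter_upwards [ev_le (mom_poly S ρ hρ hS q) (show 0 < ε / 4 by positivity),
    ev_le (mom_poly S ρ hρ hS b) (show 0 < ε / 4 by positivity)] with n hn1 hn2
  have key : Ex n (fun μ => |S n μ φ - ∫ x in (-2 : ℝ)..2, φ x * ρ x|) ≤
      Ex n (fun μ => (|S n μ (fun x => q.eval x) - ∫ x in (-2 : ℝ)..2, q.eval x * ρ x| +
        |S n μ (fun x => b.eval x) - ∫ x in (-2 : ℝ)..2, b.eval x * ρ x|) + ε / 2) := by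
    refine Ex_mono n fun μ _ => ?_
    have p1 := hpos n μ ((fun x => b.eval x) - (φ - (fun x => q.eval x))) (fun x => by
      have := (abs_le.1 (hqb x)).2
      simp only [Pi.sub_apply]; linarith)
    have p2 := hpos n μ ((fun x => b.eval x) + (φ - (fun x => q.eval x))) (fun x => by
      have := (abs_le.1 (hqb x)).1
      simp only [Pi.sub_apply, Pi.add_apply]; linarith)
    rw [map_sub, map_sub] at p1
    rw [map_add, map_sub] at p2
    rw [abs_le] at h1 h2 ⊢
    have a1 := neg_abs_le (S n μ (fun x => q.eval x) - ∫ x in (-2 : ℝ)..2, q.eval x * ρ x)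
    have a2 := le_abs_self (S n μ (fun x => q.eval x) - ∫ x in (-2 : ℝ)..2, q.eval x * ρ x)
    have a3 := le_abs_self (S n μ (fun x => b.eval x) - ∫ x in (-2 : ℝ)..2, b.eval x * ρ x)
    constructor <;> linarith
  rw [Ex_add n _ (fun _ => ε / 2), Ex_const, Ex_add] at key
  linarith

lemma trans_conv (φ : ℝ → ℝ) (hφ : Continuous φ) (C : ℝ) (hC : ∀ x, |φ x| ≤ C) :
    Tendsto (fun n => Ex n (fun μ => |TT (fun μ i => φ (cc μ i / sg n)) μ -
      ∫ x in (-2 : ℝ)..2, φ x * scd x|)) atTop (𝓝 0) := by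
  refine mom_method (fun n μ => wsum (range (μ.card + 1)) (tp μ) (fun i => cc μ i / sg n))
    (fun n μ φ h => wsum_nonneg _ _ _ (tp_nonneg μ) φ h) scd cont_scd ?_ φ hφ C hC
  intro k
  refine (Mom_l1 k).congr fun n => Ex_congr n fun μ _ => ?_
  rw [scd_moment]
  congr 2
  show TT _ μ / _ = ∑ i ∈ range (μ.card + 1), tp μ i * (cc μ i / sg n) ^ k
  unfold TT
  rw [sum_div]
  exact sum_congr rfl fun i _ => by rw [div_pow]; ring

lemma cells_conv (φ : ℝ → ℝ) (hφ : Continuous φ) (C : ℝ) (hC : ∀ x, |φ x| ≤ C) :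
    Tendsto (fun n => Ex n (fun μ => |∑ c ∈ μ.cells, 1 / sg n ^ 2 * φ (((c.2 : ℝ) - c.1) / sg n) -
      ∫ x in (-2 : ℝ)..2, φ x * hsh x|)) atTop (𝓝 0) := by
  refine mom_method (fun n μ => wsum μ.cells (fun _ => 1 / sg n ^ 2) (fun c => ((c.2 : ℝ) - c.1) / sg n))
    (fun n μ φ h => wsum_nonneg _ _ _ (fun _ => by positivity) φ h) hsh cont_hsh ?_ φ hφ C hC
  intro k
  refine (psum_l1 k).congr fun n => Ex_congr n fun μ _ => ?_
  rw [hsh_moment]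
  congr 2
  show _ = ∑ c ∈ μ.cells, 1 / sg n ^ 2 * (((c.2 : ℝ) - c.1) / sg n) ^ k
  unfold psum
  rw [sum_div]
  exact sum_congr rfl fun i _ => by rw [div_pow, pow_add]; ring

end MomentMethod

section ShapeN
open MeasureTheory Filter Finset
open scoped Topology

/-- Number of boxes on a diagonal. -/
def NN (μ : YoungDiagram) (c : ℤ) : ℕ := #{x ∈ μ.cells | (x.2 : ℤ) - x.1 = c}

lemma NN_succ_le (μ : YoungDiagram) (c : ℤ) : NN μ (c + 1) ≤ NN μ c + 1 := by
  classical
  unfold NN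
  refine le_trans (card_le_card (t := insert ((-(c+1)).toNat, 0)
    (image (fun x : ℕ × ℕ => (x.1, x.2 + 1)) {x ∈ μ.cells | (x.2 : ℤ) - x.1 = c})) ?_)
    ((card_insert_le _ _).trans (Nat.add_le_add_right card_image_le 1))
  rintro ⟨a, b⟩ h
  rw [mem_filter, YoungDiagram.mem_cells] at h
  obtain ⟨h1, h2⟩ := h
  simp only at h2
  rw [mem_insert, mem_image]
  rcases b with _ | b
  · left
    ext <;> simp; omega
  · right
    refine ⟨(a, b), ?_, rfl⟩
    rw [mem_filter, YoungDiagram.mem_cells]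
    refine ⟨μ.up_left_mem le_rfl (Nat.le_succ b) h1, ?_⟩
    push_cast at h2 ⊢
    omega

lemma NN_le_succ (μ : YoungDiagram) (c : ℤ) : NN μ c ≤ NN μ (c + 1) + 1 := by
  classical
  unfold NN
  refine le_trans (card_le_card (t := insert (0, c.toNat)
    (image (fun x : ℕ × ℕ => (x.1 + 1, x.2)) {x ∈ μ.cells | (x.2 : ℤ) - x.1 = c + 1})) ?_)
    ((card_insert_le _ _).trans (Nat.add_le_add_right card_image_le 1))
  rintro ⟨a, b⟩ h
  rw [mem_filter, YoungDiagram.mem_cells] at h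
  obtain ⟨h1, h2⟩ := h
  simp only at h2
  rw [mem_insert, mem_image]
  rcases a with _ | a
  · left
    ext <;> simp; omega
  · right
    refine ⟨(a, b), ?_, rfl⟩
    rw [mem_filter, YoungDiagram.mem_cells]
    refine ⟨μ.up_left_mem (Nat.le_succ a) le_rfl h1, ?_⟩
    push_cast at h2 ⊢
    omega

lemma NN_lip_nat (μ : YoungDiagram) (c : ℤ) (k : ℕ) : |(NN μ (c + k) : ℝ) - NN μ c| ≤ k := by
  induction k with
  | zero => simp
  | succ k ih =>
    have h1 := NN_succ_le μ (c + k)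
    have h2 := NN_le_succ μ (c + k)
    have e : c + ((k + 1 : ℕ) : ℤ) = c + k + 1 := by push_cast; ring
    rw [e]
    have h1' : (NN μ (c + k + 1) : ℝ) ≤ NN μ (c + k) + 1 := by exact_mod_cast h1
    have h2' : (NN μ (c + k) : ℝ) ≤ NN μ (c + k + 1) + 1 := by exact_mod_cast h2
    rw [abs_le] at ih ⊢
    push_cast
    constructor <;> linarith [ih.1, ih.2]

lemma NN_lip (μ : YoungDiagram) (c d : ℤ) : |(NN μ c : ℝ) - NN μ d| ≤ |(c : ℝ) - d| := by
  rcases le_total d c with h | h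
  · obtain ⟨k, rfl⟩ := Int.le.dest h
    have := NN_lip_nat μ d k
    refine this.trans (le_of_eq ?_)
    push_cast
    rw [add_sub_cancel_left, abs_of_nonneg (by positivity)]
  · obtain ⟨k, rfl⟩ := Int.le.dest h
    have := NN_lip_nat μ c k
    rw [abs_sub_comm]
    refine this.trans (le_of_eq ?_)
    push_cast
    rw [sub_add_cancel_left, abs_neg, abs_of_nonneg (by positivity)]

lemma NN_addable {μ : YoungDiagram} {i : ℕ} (h : Addable μ i) :
    NN μ ((μ.rowLen i : ℤ) - i) = min i (μ.rowLen i) := by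
  classical
  have : {x ∈ μ.cells | (x.2 : ℤ) - x.1 = (μ.rowLen i : ℤ) - i} =
      image (fun m => (i - 1 - m, μ.rowLen i - 1 - m)) (range (min i (μ.rowLen i))) := by
    ext ⟨a, b⟩
    rw [mem_filter, YoungDiagram.mem_cells, mem_image]
    constructor
    · rintro ⟨h1, h2⟩
      simp only at h2
      rw [YoungDiagram.mem_iff_lt_rowLen] at h1
      have h3 : a < i := by
        by_contra hc
        have := μ.rowLen_anti i a (by omega)
        omega
      refine ⟨i - 1 - a, ?_, ?_⟩
      · rw [mem_range]; omega
      · ext <;> simp <;> omega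
    · rintro ⟨m, hm, h2⟩
      rw [mem_range] at hm
      rw [Prod.mk.injEq] at h2
      rw [YoungDiagram.mem_iff_lt_rowLen]
      have h3 := h a (by omega)
      constructor
      · omega
      · simp only; omega
  unfold NN
  rw [this, card_image_of_injOn, card_range]
  intro a ha b hb hab
  rw [mem_coe, mem_range] at ha hb
  simp only [Prod.mk.injEq] at hab
  omega

lemma addable_sum {μ : YoungDiagram} {i : ℕ} (h : Addable μ i) :
    (i : ℝ) + μ.rowLen i = |cc μ i| + 2 * NN μ ((μ.rowLen i : ℤ) - i) := by
  rw [NN_addable h]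
  unfold cc
  push_cast
  rcases le_total (i : ℝ) (μ.rowLen i) with h | h
  · rw [min_eq_left h, abs_of_nonneg (by linarith)]; ring
  · rw [min_eq_right h, abs_of_nonpos (by linarith)]; ring

noncomputable def hn (n : ℕ) (μ : YoungDiagram) (y : ℝ) : ℝ := NN μ ⌊y * sg n⌋ / sg n

lemma hn_lip_aux (n : ℕ) (μ : YoungDiagram) (c : ℤ) (y : ℝ) :
    |(NN μ c : ℝ) / sg n - hn n μ y| ≤ |(c : ℝ) / sg n - y| + 1 / sg n := by
  unfold hn
  have hs := sg_pos n
  rw [← sub_div, abs_div, abs_of_pos hs, div_le_iff₀ hs, add_mul, div_mul_cancel₀ _ hs.ne']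
  refine (NN_lip μ _ _).trans ?_
  have e : |(c : ℝ) / sg n - y| * sg n = |(c : ℝ) - y * sg n| := by
    rw [← abs_of_pos hs, ← abs_mul, abs_of_pos hs, sub_mul, div_mul_cancel₀ _ hs.ne']
  rw [e]
  have h1 := Int.floor_le (y * sg n)
  have h2 := Int.lt_floor_add_one (y * sg n)
  calc |(c : ℝ) - ⌊y * sg n⌋| = |((c : ℝ) - y * sg n) + (y * sg n - ⌊y * sg n⌋)| := by congr 1; ring
    _ ≤ _ := abs_add_le _ _
    _ ≤ _ := by
      gcongr
      rw [abs_of_nonneg (by linarith)]; linarith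

lemma diag_sum (μ : YoungDiagram) (K : ℤ) (hK : (μ.card : ℤ) + 1 ≤ K) (G : ℤ → ℝ) :
    ∑ x ∈ μ.cells, G ((x.2 : ℤ) - x.1) = ∑ c ∈ Ico (-K) K, (NN μ c : ℝ) * G c := by
  classical
  rw [← sum_fiberwise_of_maps_to (s := μ.cells) (t := Ico (-K) K) (g := fun x => (x.2 : ℤ) - x.1)]
  · refine sum_congr rfl fun c _ => ?_
    unfold NN
    rw [← nsmul_eq_mul, ← sum_const]
    refine sum_congr rfl fun x hx => ?_
    rw [mem_filter] at hx
    rw [hx.2]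
  · rintro ⟨a, b⟩ h
    rw [YoungDiagram.mem_cells, YoungDiagram.mem_iff_lt_rowLen] at h
    have h1 : a < μ.card := by
      by_contra hc
      have := rowLen_zero_of_card μ a (by omega)
      omega
    have h2 : b < μ.card := by
      have : μ.transpose.card = μ.card := by
        unfold YoungDiagram.card
        exact (card_equiv (Equiv.prodComm ℕ ℕ) (by simp))
      by_contra hc
      have h3 := rowLen_zero_of_card μ.transpose b (by omega)
      have h4 : (b, a) ∈ μ.transpose := by
        rw [YoungDiagram.mem_transpose]; exact YoungDiagram.mem_iff_lt_rowLen.2 h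
      rw [YoungDiagram.mem_iff_lt_rowLen] at h4
      omega
    rw [mem_Ico]
    simp only
    omega

end ShapeN

section ShapeC
open MeasureTheory Filter Finset
open scoped Topology

noncomputable def tent (y δ x : ℝ) : ℝ := max 0 (δ - |x - y|)

lemma cont_tent (y δ : ℝ) : Continuous (tent y δ) := by unfold tent; fun_prop

lemma tent_nonneg (y δ x : ℝ) : 0 ≤ tent y δ x := le_max_left _ _

lemma tent_le {y δ : ℝ} (hδ : 0 ≤ δ) (x : ℝ) : tent y δ x ≤ δ :=
  max_le hδ (by linarith [abs_nonneg (x - y)])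

lemma tent_zero {y δ x : ℝ} (h : δ ≤ |x - y|) : tent y δ x = 0 := max_eq_left (by linarith)

lemma tent_lip (y δ a b : ℝ) : |tent y δ a - tent y δ b| ≤ |a - b| := by
  unfold tent
  refine (abs_max_sub_max_le_max _ _ _ _).trans ?_
  rw [sub_self, abs_zero, max_eq_right (abs_nonneg _)]
  have h := abs_abs_sub_abs_le_abs_sub (b - y) (a - y)
  have e : δ - |a - y| - (δ - |b - y|) = |b - y| - |a - y| := by ring
  rw [e]
  refine h.trans (le_of_eq ?_)
  rw [abs_sub_comm]; congr 1; ring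

noncomputable def tg (y δ x : ℝ) : ℝ := ∫ t in (y - δ)..x, tent y δ t

lemma tent_int (y δ a b : ℝ) : IntervalIntegrable (tent y δ) volume a b :=
  (cont_tent y δ).intervalIntegrable _ _

lemma tg_sub (y δ a b : ℝ) : tg y δ b - tg y δ a = ∫ t in a..b, tent y δ t := by
  unfold tg
  rw [intervalIntegral.integral_interval_sub_left (tent_int ..) (tent_int ..)]

lemma tg_mono (y δ : ℝ) {a b : ℝ} (h : a ≤ b) : tg y δ a ≤ tg y δ b := by
  rw [← sub_nonneg, tg_sub]
  exact intervalIntegral.integral_nonneg h fun _ _ => tent_nonneg _ _ _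

lemma tg_left {y δ x : ℝ} (h : x ≤ y - δ) : tg y δ x = 0 := by
  unfold tg
  rw [intervalIntegral.integral_congr (g := fun _ => 0)]
  · simp
  · intro t ht
    rw [Set.uIcc_of_ge h] at ht
    refine tent_zero ?_
    rw [abs_sub_comm]
    exact le_trans (by linarith [ht.2]) (le_abs_self _)

lemma tg_right {y δ x : ℝ} (h : y + δ ≤ x) : tg y δ x = tg y δ (y + δ) := by
  rw [← sub_eq_zero, tg_sub, intervalIntegral.integral_congr (g := fun _ => 0)]
  · simp
  · intro t ht
    rw [Set.uIcc_of_le h] at ht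
    refine tent_zero ?_
    exact le_trans (by linarith [ht.1]) (le_abs_self _)

noncomputable def ZZ (y δ : ℝ) : ℝ := tg y δ (y + δ)

lemma ZZ_pos (y : ℝ) {δ : ℝ} (hδ : 0 < δ) : 0 < ZZ y δ := by
  unfold ZZ tg
  refine intervalIntegral.intervalIntegral_pos_of_pos_on (tent_int ..) ?_ (by linarith)
  intro x hx
  refine lt_max_of_lt_right ?_
  have : |x - y| < δ := abs_lt.2 ⟨by linarith [hx.1], by linarith [hx.2]⟩
  linarith

lemma tg_riem (y δ a s : ℝ) (hs : 0 < s) :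
    |s * (tg y δ (a + 1 / s) - tg y δ a) - tent y δ a| ≤ 1 / s := by
  have h1 : s * (tg y δ (a + 1 / s) - tg y δ a) - tent y δ a =
      s * ∫ t in a..(a + 1 / s), (tent y δ t - tent y δ a) := by
    rw [tg_sub, intervalIntegral.integral_sub (tent_int ..) (by simp), intervalIntegral.integral_const,
      smul_eq_mul]
    field_simp
    ring
  rw [h1, abs_mul, abs_of_pos hs]
  have hp : 0 < 1 / s := by positivity
  have h2 := intervalIntegral.norm_integral_le_of_norm_le_const (a := a) (b := a + 1 / s)
    (f := fun t => tent y δ t - tent y δ a) (C := 1 / s) (fun x hx => by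
      rw [Set.uIoc_of_le (by linarith)] at hx
      rw [Real.norm_eq_abs]
      refine (tent_lip ..).trans ?_
      rw [abs_of_nonneg (by linarith [hx.1])]
      linarith [hx.2])
  rw [Real.norm_eq_abs, add_sub_cancel_left, abs_of_pos hp] at h2
  calc _ ≤ s * (1 / s * (1 / s)) := by gcongr
    _ = 1 / s := by field_simp

lemma shape_det (n : ℕ) (μ : YoungDiagram) (hμ : μ.card = n) (y δ : ℝ) (hδ : 0 < δ) :
    |(∑ c ∈ μ.cells, 1 / sg n ^ 2 * tent y δ (((c.2:ℝ) - c.1)/sg n)) - ZZ y δ * hn n μ y| ≤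
      ZZ y δ * (δ + 2 / sg n) + 1 / sg n := by
  have hs := sg_pos n
  set s := sg n with hsdef
  set G : ℤ → ℝ := fun c => tg y δ (((c + 1 : ℤ) : ℝ) / s) - tg y δ ((c : ℝ) / s) with hG
  have hG0 : ∀ c, 0 ≤ G c := fun c => by
    rw [hG]; beta_reduce
    rw [sub_nonneg]
    refine tg_mono _ _ ?_
    gcongr
    push_cast; linarith
  obtain ⟨K₀, hK₀⟩ := exists_nat_ge ((|y| + δ) * s)
  set K : ℤ := K₀ + n + 1 with hK
  have hKr : (|y| + δ) * s ≤ K := by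
    rw [hK]; push_cast
    have : (0 : ℝ) ≤ n := by positivity
    linarith
  have hKs : |y| + δ ≤ (K : ℝ) / s := by rwa [le_div_iff₀ hs]
  -- total mass
  have hnK : -K ≤ K := by omega
  have htot : ∑ c ∈ Ico (-K) K, G c = ZZ y δ := by
    have h1 : ∀ m : ℕ, ∑ c ∈ Ico (-K) (-K + m), G c =
        tg y δ (((-K + m : ℤ) : ℝ) / s) - tg y δ (((-K : ℤ) : ℝ) / s) := by
      intro m
      induction m with
      | zero => simp
      | succ m ih =>
        have e : Ico (-K) (-K + ((m + 1 : ℕ) : ℤ)) = insert (-K + (m : ℤ)) (Ico (-K) (-K + m)) := by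
          ext x; simp only [mem_Ico, mem_insert]; push_cast; omega
        rw [e, sum_insert (by simp), ih, hG]
        beta_reduce
        have e2 : -K + (m : ℤ) + 1 = -K + ((m + 1 : ℕ) : ℤ) := by push_cast; ring
        rw [e2]; ring
    have h2 := h1 (2 * K).toNat
    have e : -K + ((2 * K).toNat : ℤ) = K := by omega
    rw [e] at h2
    have hl : tg y δ (((-K : ℤ) : ℝ) / s) = 0 := by
      apply tg_left
      push_cast
      rw [neg_div]
      linarith [neg_abs_le y]
    rw [h2, hl, sub_zero, tg_right (by linarith [le_abs_self y])]
    rfl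
  have hsum : ∑ c ∈ μ.cells, 1 / s ^ 2 * (s * G ((c.2 : ℤ) - c.1)) =
      ∑ c ∈ Ico (-K) K, (NN μ c : ℝ) / s * G c := by
    rw [diag_sum μ K (by omega) (fun c => 1 / s ^ 2 * (s * G c))]
    refine sum_congr rfl fun c _ => ?_
    field_simp
  have hA : |(∑ c ∈ μ.cells, 1 / s ^ 2 * (s * G ((c.2 : ℤ) - c.1))) - ZZ y δ * hn n μ y| ≤
      ZZ y δ * (δ + 2 / s) := by
    rw [hsum, ← htot, sum_mul, sum_mul, ← sum_sub_distrib]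
    refine (abs_sum_le_sum_abs _ _).trans (sum_le_sum fun c _ => ?_)
    have e : (NN μ c : ℝ) / s * G c - G c * hn n μ y = G c * ((NN μ c : ℝ) / s - hn n μ y) := by ring
    rw [e, abs_mul, abs_of_nonneg (hG0 c)]
    rcases eq_or_ne (G c) 0 with h0 | h0
    · rw [h0, zero_mul, zero_mul]
    · refine mul_le_mul_of_nonneg_left ?_ (hG0 c)
      refine (hn_lip_aux n μ c y).trans ?_
      rw [← hsdef]
      have h1 : y - δ < ((c + 1 : ℤ) : ℝ) / s := by
        by_contra hc
        push Not at hc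
        apply h0
        rw [hG]; beta_reduce
        rw [tg_left hc, tg_left, sub_self]
        refine le_trans ?_ hc
        gcongr
        push_cast; linarith
      have h2 : (c : ℝ) / s < y + δ := by
        by_contra hc
        push Not at hc
        apply h0
        rw [hG]; beta_reduce
        rw [tg_right hc, tg_right, sub_self]
        refine le_trans hc ?_
        gcongr
        push_cast; linarith
      have h3 : ((c + 1 : ℤ) : ℝ) / s = c / s + 1 / s := by push_cast; rw [add_div]
      rw [h3] at h1
      have h4 : |(c : ℝ) / s - y| ≤ δ + 1 / s := by
        have hp : 0 < 1 / s := by positivity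
        rw [abs_le]; constructor <;> linarith
      have h5 : 2 / s = 1 / s + 1 / s := by ring
      linarith
  have hB : |(∑ c ∈ μ.cells, 1 / s ^ 2 * tent y δ (((c.2:ℝ) - c.1)/s)) -
      ∑ c ∈ μ.cells, 1 / s ^ 2 * (s * G ((c.2 : ℤ) - c.1))| ≤ 1 / s := by
    rw [← sum_sub_distrib]
    refine (abs_sum_le_sum_abs _ _).trans ?_
    have hb : ∀ c ∈ μ.cells, |1 / s ^ 2 * tent y δ (((c.2:ℝ) - c.1)/s) -
        1 / s ^ 2 * (s * G ((c.2 : ℤ) - c.1))| ≤ 1 / s ^ 2 * (1 / s) := by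
      intro c _
      rw [← mul_sub, abs_mul, abs_of_pos (by positivity : 0 < 1 / s ^ 2), abs_sub_comm]
      refine mul_le_mul_of_nonneg_left ?_ (by positivity)
      have := tg_riem y δ (((c.2:ℝ) - c.1)/s) s hs
      rw [← add_div] at this
      rw [hG]
      push_cast
      exact this
    refine (sum_le_card_nsmul _ _ _ hb).trans ?_
    have hc : (#μ.cells : ℝ) = n := by exact_mod_cast hμ
    rw [nsmul_eq_mul, hc, ← mul_assoc]
    have h7 : s ^ 2 = n + 1 := by rw [hsdef, sg_sq]
    have : (n : ℝ) * (1 / s ^ 2) ≤ 1 := by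
      rw [h7, mul_one_div, div_le_one (by positivity)]; linarith
    calc _ ≤ 1 * (1 / s) := by gcongr
      _ = _ := one_mul _
  have := abs_add_le ((∑ c ∈ μ.cells, 1 / s ^ 2 * tent y δ (((c.2:ℝ) - c.1)/s)) -
      ∑ c ∈ μ.cells, 1 / s ^ 2 * (s * G ((c.2 : ℤ) - c.1)))
    ((∑ c ∈ μ.cells, 1 / s ^ 2 * (s * G ((c.2 : ℤ) - c.1))) - ZZ y δ * hn n μ y)
  rw [sub_add_sub_cancel] at this
  linarith

lemma hsh_zero {x : ℝ} (h : 2 ≤ |x|) : hsh x = 0 := by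
  rcases h.eq_or_lt with h | h
  · unfold hsh
    rcases abs_cases x with h' | h'
    · have : x = 2 := by linarith [h'.1]
      rw [this, Omega_two]; norm_num
    · have : x = -2 := by linarith [h'.1]
      rw [this, Omega_neg_two]; norm_num
  · unfold hsh Omegastar
    rw [if_neg (by linarith)]; ring

lemma hsh_int (y δ ω : ℝ) (hδ : 0 < δ) (hω : ∀ x, |x - y| ≤ δ → |hsh x - hsh y| ≤ ω) :
    |(∫ x in (-2:ℝ)..2, tent y δ x * hsh x) - ZZ y δ * hsh y| ≤ ZZ y δ * ω := by
  have hc := cont_hsh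
  have ht := cont_tent y δ
  set K := |y| + δ + 2 with hK
  have hK2 : 2 ≤ K := by have := abs_nonneg y; linarith
  have hci : ∀ a b : ℝ, IntervalIntegrable (fun x => tent y δ x * hsh x) volume a b :=
    fun a b => (ht.mul hc).intervalIntegrable _ _
  have h1 : ∫ x in (-2:ℝ)..2, tent y δ x * hsh x = ∫ x in (-K)..K, tent y δ x * hsh x := by
    rw [← intervalIntegral.integral_add_adjacent_intervals (hci (-K) (-2)) (hci (-2) K),
      ← intervalIntegral.integral_add_adjacent_intervals (hci (-2) 2) (hci 2 K)]
    rw [intervalIntegral.integral_congr (a := -K) (b := -2) (g := fun _ => 0),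
      intervalIntegral.integral_congr (a := 2) (b := K) (g := fun _ => 0)]
    · simp
    · intro x hx
      rw [Set.uIcc_of_le hK2] at hx
      beta_reduce
      rw [hsh_zero (hx.1.trans (le_abs_self _)), mul_zero]
    · intro x hx
      rw [Set.uIcc_of_le (by linarith)] at hx
      beta_reduce
      rw [hsh_zero (by linarith [neg_le_abs x, hx.2]), mul_zero]
  have h2 : ZZ y δ = ∫ x in (-K)..K, tent y δ x := by
    have hl : tg y δ (-K) = 0 := tg_left (by linarith [neg_abs_le y])
    rw [← tg_sub, hl, sub_zero, tg_right (by linarith [le_abs_self y])]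
    rfl
  rw [h1, h2, ← intervalIntegral.integral_mul_const, ← intervalIntegral.integral_mul_const,
    ← intervalIntegral.integral_sub (hci _ _) ((tent_int ..).mul_const _)]
  refine (intervalIntegral.abs_integral_le_integral_abs (by linarith)).trans ?_
  refine intervalIntegral.integral_mono_on (by linarith)
    (Continuous.intervalIntegrable (by fun_prop) _ _) ((tent_int ..).mul_const _) ?_
  intro x _
  rw [← mul_sub, abs_mul, abs_of_nonneg (tent_nonneg ..)]
  rcases le_total δ |x - y| with h | h
  · rw [tent_zero h, zero_mul, zero_mul]
  · exact mul_le_mul_of_nonneg_left (hω x h) (tent_nonneg ..)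

lemma hn_conv (y : ℝ) : Tendsto (fun n => Ex n (fun μ => |hn n μ y - hsh y|)) atTop (𝓝 0) := by
  refine tendsto_zero_eps (fun n => Ex_nonneg n fun _ _ => abs_nonneg _) ?_
  intro ε hε
  obtain ⟨δ', hδ', hδ''⟩ := Metric.continuousAt_iff.1 (cont_hsh.continuousAt (x := y)) (ε / 4) (by positivity)
  set δ := min (δ' / 2) (ε / 4) with hδd
  have hδ : 0 < δ := by positivity
  have hω : ∀ x, |x - y| ≤ δ → |hsh x - hsh y| ≤ ε / 4 := fun x hx => by
    have : dist x y < δ' := by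
      rw [Real.dist_eq]
      have := min_le_left (δ' / 2) (ε / 4)
      linarith
    exact (hδ'' this).le
  have hZ := ZZ_pos y hδ
  have hX := cells_conv (tent y δ) (cont_tent y δ) δ (fun x => by
    rw [abs_of_nonneg (tent_nonneg ..)]; exact tent_le hδ.le x)
  have hinv : Tendsto (fun n => 1 / sg n) atTop (𝓝 0) := by
    simp only [one_div]; exact sg_tendsto.inv_tendsto_atTop
  have hY : Tendsto (fun n => 2 * (1 / sg n) + (1 / ZZ y δ) * (1 / sg n) +
      (1 / ZZ y δ) * Ex n (fun μ => |∑ c ∈ μ.cells, 1 / sg n ^ 2 * tent y δ (((c.2:ℝ) - c.1)/sg n) -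
        ∫ x in (-2:ℝ)..2, tent y δ x * hsh x|)) atTop (𝓝 0) := by
    have := ((hinv.const_mul 2).add (hinv.const_mul (1 / ZZ y δ))).add (hX.const_mul (1 / ZZ y δ))
    simpa using this
  filter_upwards [ev_le hY (show 0 < ε / 2 by positivity)] with n hn'
  have key : Ex n (fun μ => |hn n μ y - hsh y|) ≤ Ex n (fun μ =>
      (δ + ε / 4 + 2 * (1 / sg n) + (1 / ZZ y δ) * (1 / sg n)) + (1 / ZZ y δ) *
      |∑ c ∈ μ.cells, 1 / sg n ^ 2 * tent y δ (((c.2:ℝ) - c.1)/sg n) -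
        ∫ x in (-2:ℝ)..2, tent y δ x * hsh x|) := by
    refine Ex_mono n fun μ hμ => ?_
    have h1 := shape_det n μ hμ y δ hδ
    have h2 := hsh_int y δ (ε / 4) hδ hω
    generalize (∑ c ∈ μ.cells, 1 / sg n ^ 2 * tent y δ (((c.2:ℝ) - c.1)/sg n)) = S at *
    generalize (∫ x in (-2:ℝ)..2, tent y δ x * hsh x) = I at *
    generalize ZZ y δ = Z at *
    have h3 : Z * |hn n μ y - hsh y| ≤ Z * (δ + 2 / sg n) + 1 / sg n + |S - I| + Z * (ε / 4) := by
      rw [← abs_of_pos hZ, ← abs_mul, abs_of_pos hZ]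
      have e : Z * (hn n μ y - hsh y) = -(S - Z * hn n μ y) + ((S - I) + (I - Z * hsh y)) := by ring
      rw [e]
      have a1 := abs_add_le (-(S - Z * hn n μ y)) ((S - I) + (I - Z * hsh y))
      have a2 := abs_add_le (S - I) (I - Z * hsh y)
      rw [abs_neg] at a1
      linarith
    have h4 : |hn n μ y - hsh y| ≤ (Z * (δ + 2 / sg n) + 1 / sg n + |S - I| + Z * (ε / 4)) / Z := by
      rw [le_div_iff₀ hZ]; linarith
    refine h4.trans (le_of_eq ?_)
    have := sg_pos n
    field_simp
    ring
  rw [Ex_add, Ex_const, Ex_smul] at key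
  have := min_le_right (δ' / 2) (ε / 4)
  linarith

end ShapeC

section FinalP
open MeasureTheory Filter Finset
open scoped Topology

lemma unif_f (f : ℝ × ℝ → ℝ) (hf : Continuous f) (K ε : ℝ) (hε : 0 < ε) :
    ∃ η > 0, ∀ u v, |u| ≤ K → |v - Omegastar u| < η → |f (u, v) - f (u, Omegastar u)| ≤ ε := by
  have hc : IsCompact ((fun u : ℝ => (u, Omegastar u)) '' Set.Icc (-K) K) :=
    isCompact_Icc.image (by have := cont_Omega; fun_prop)
  have h := hc.uniformContinuousAt_of_continuousAt f (fun x _ => hf.continuousAt)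
    (Metric.dist_mem_uniformity hε)
  obtain ⟨η, hη, h2⟩ := Metric.mem_uniformity_dist.1 h
  refine ⟨η, hη, fun u v hu hv => ?_⟩
  have h3 := h2 (a := (u, Omegastar u)) (b := (u, v)) (by
    rw [Prod.dist_eq]
    simp only [dist_self]
    rw [max_lt_iff]
    exact ⟨hη, by rwa [dist_comm, Real.dist_eq]⟩)
  have h4 := h3 ⟨u, abs_le.1 hu, rfl⟩
  have h5 : dist (f (u, Omegastar u)) (f (u, v)) < ε := h4
  rw [dist_comm, Real.dist_eq] at h5
  exact h5.le

lemma unif_h (K ω : ℝ) (hω : 0 < ω) :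
    ∃ δ > 0, ∀ u y, |u| ≤ K → |u - y| < δ → |hsh y - hsh u| ≤ ω := by
  have h := (isCompact_Icc (a := -K) (b := K)).uniformContinuousAt_of_continuousAt hsh
    (fun x _ => cont_hsh.continuousAt) (Metric.dist_mem_uniformity hω)
  obtain ⟨η, hη, h2⟩ := Metric.mem_uniformity_dist.1 h
  refine ⟨η, hη, fun u v hu hv => ?_⟩
  have h3 := h2 (a := u) (b := v) (by rwa [Real.dist_eq])
  have h5 : dist (hsh u) (hsh v) < ω := h3 (abs_le.1 hu)
  rw [dist_comm, Real.dist_eq] at h5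
  exact h5.le

lemma det_bound (n : ℕ) (μ : YoungDiagram) (i : ℕ) (hi : Addable μ i) (y δ ω : ℝ)
    (h1 : |cc μ i / sg n - y| ≤ δ) (h2 : |hsh y - hsh (cc μ i / sg n)| ≤ ω) :
    |((μ.rowLen i + 1 : ℝ) + (i + 1)) / sg n - Omegastar (cc μ i / sg n)| ≤
      2 * |hn n μ y - hsh y| + 2 * δ + 2 * ω + 4 * (1 / sg n) := by
  have hs := sg_pos n
  have h3 := addable_sum hi
  have h4 := hn_lip_aux n μ ((μ.rowLen i : ℤ) - i) y
  have e1 : ((((μ.rowLen i : ℤ) - i : ℤ)) : ℝ) = cc μ i := by unfold cc; push_cast; rfl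
  rw [e1] at h4
  generalize (NN μ ((μ.rowLen i : ℤ) - i) : ℝ) = N at *
  set u := cc μ i / sg n with hu
  have e2 : |cc μ i| = |u| * sg n := by
    rw [hu, abs_div, abs_of_pos hs, div_mul_cancel₀ _ hs.ne']
  have e3 : ((μ.rowLen i + 1 : ℝ) + (i + 1)) / sg n = |u| + 2 * (N / sg n) + 2 * (1 / sg n) := by
    have : (μ.rowLen i + 1 : ℝ) + (i + 1) = |u| * sg n + 2 * N + 2 := by rw [← e2]; linarith
    rw [this]; field_simp
  have e4 : Omegastar u = |u| + 2 * hsh u := by unfold hsh; ring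
  rw [e3, e4]
  have e5 : |u| + 2 * (N / sg n) + 2 * (1 / sg n) - (|u| + 2 * hsh u) =
    2 * ((N / sg n - hn n μ y) + (hn n μ y - hsh y) + (hsh y - hsh u) + 1 / sg n) := by ring
  rw [e5, abs_mul, abs_two]
  have a1 := abs_add_le ((N / sg n - hn n μ y) + (hn n μ y - hsh y) + (hsh y - hsh u)) (1 / sg n)
  have a2 := abs_add_le ((N / sg n - hn n μ y) + (hn n μ y - hsh y)) (hsh y - hsh u)
  have a3 := abs_add_le (N / sg n - hn n μ y) (hn n μ y - hsh y)
  rw [abs_of_pos (by positivity : 0 < 1 / sg n)] at a1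
  linarith

lemma main_conv (f : ℝ × ℝ → ℝ) (hf : Continuous f) (C : ℝ) (hC : 0 < C) (hfC : ∀ x, |f x| ≤ C) :
    Tendsto (fun n => Ex n (fun μ => |TT (fun μ i => f (cc μ i / sg n,
      ((μ.rowLen i + 1 : ℝ) + (i + 1)) / sg n)) μ -
        TT (fun μ i => f (cc μ i / sg n, Omegastar (cc μ i / sg n))) μ|)) atTop (𝓝 0) := by
  refine tendsto_zero_eps (fun n => Ex_nonneg n fun _ _ => abs_nonneg _) ?_
  intro ε hε
  set K := 1 + 16 * C / ε with hK
  have hKp : 0 < 16 * C / ε := by positivity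
  have hK2 : 16 * C / ε ≤ K ^ 2 := by nlinarith
  have hKC : 2 * C / K ^ 2 ≤ ε / 8 := by
    rw [div_le_iff₀ (by positivity)]
    rw [div_le_iff₀ hε] at hK2
    linarith
  obtain ⟨η, hη, hfη⟩ := unif_f f hf K (ε / 4) (by positivity)
  set ω := ε * η / (32 * C) with hω
  have hωp : 0 < ω := by positivity
  obtain ⟨δ', hδ', hδh⟩ := unif_h K ω hωp
  set δ := min δ' ω with hδd
  have hδ : 0 < δ := by positivity
  obtain ⟨t, -, htf, htc⟩ := (isCompact_Icc (a := -K) (b := K)).finite_cover_balls hδ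
  set s := htf.toFinset with hs
  -- pointwise bound
  have key : ∀ n, ∀ μ : YoungDiagram, |TT (fun μ i => f (cc μ i / sg n,
      ((μ.rowLen i + 1 : ℝ) + (i + 1)) / sg n)) μ -
        TT (fun μ i => f (cc μ i / sg n, Omegastar (cc μ i / sg n))) μ| ≤
      (ε / 4 + 2 * C / η * (2 * (δ + ω) + 4 * (1 / sg n)) + ε / 8) +
        (4 * C / η * ∑ y ∈ s, |hn n μ y - hsh y| + ε / 8 * |Mom 2 μ / sg n ^ 2 - mm 2|) := by
    intro n μ
    have hsn := sg_pos n
    set A : YoungDiagram → ℝ := fun μ => ε / 4 + 2 * C / η * (2 * (δ + ω) + 4 * (1 / sg n)) +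
      4 * C / η * ∑ y ∈ s, |hn n μ y - hsh y| with hA
    have hA0 : ∀ μ, 0 ≤ A μ := fun μ => by rw [hA]; positivity
    set B : YoungDiagram → ℕ → ℝ := fun μ i => A μ + ε / 8 * (cc μ i / sg n) ^ 2 with hB
    have pt : ∀ i, Addable μ i → |f (cc μ i / sg n, ((μ.rowLen i + 1 : ℝ) + (i + 1)) / sg n) -
        f (cc μ i / sg n, Omegastar (cc μ i / sg n))| ≤ B μ i := by
      intro i hi
      rw [hB]; beta_reduce
      set u := cc μ i / sg n with hu
      set v := ((μ.rowLen i + 1 : ℝ) + (i + 1)) / sg n with hv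
      have h2C : |f (u, v) - f (u, Omegastar u)| ≤ 2 * C := by
        have := abs_sub (f (u, v)) (f (u, Omegastar u))
        linarith [hfC (u, v), hfC (u, Omegastar u)]
      rcases le_or_gt |u| K with huK | huK
      · have hmem := htc (abs_le.1 huK)
        rw [Set.mem_iUnion₂] at hmem
        obtain ⟨y, hy, hyb⟩ := hmem
        rw [Metric.mem_ball, Real.dist_eq] at hyb
        have hb := det_bound n μ i hi y δ ω hyb.le
          (hδh u y huK (lt_of_lt_of_le hyb (min_le_left _ _)))
        rw [← hu, ← hv] at hb
        have hD : |hn n μ y - hsh y| ≤ ∑ y ∈ s, |hn n μ y - hsh y| :=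
          single_le_sum (f := fun y => |hn n μ y - hsh y|) (fun _ _ => abs_nonneg _)
            (htf.mem_toFinset.2 hy)
        have hb2 : |f (u, v) - f (u, Omegastar u)| ≤ ε / 4 + 2 * C / η * |v - Omegastar u| := by
          rcases lt_or_ge |v - Omegastar u| η with h | h
          · have := hfη u v huK h
            have : 0 ≤ 2 * C / η * |v - Omegastar u| := by positivity
            linarith
          · have : 2 * C ≤ 2 * C / η * |v - Omegastar u| := by
              calc 2 * C = 2 * C / η * η := by field_simp
                _ ≤ _ := by gcongr
            linarith
        have hb3 : 2 * C / η * |v - Omegastar u| ≤ 2 * C / η * (2 * (∑ y ∈ s, |hn n μ y - hsh y|) +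
            2 * δ + 2 * ω + 4 * (1 / sg n)) := by
          gcongr
          linarith
        have hq : 0 ≤ ε / 8 * u ^ 2 := by positivity
        have e : 2 * C / η * (2 * (∑ y ∈ s, |hn n μ y - hsh y|) + 2 * δ + 2 * ω + 4 * (1 / sg n)) =
          2 * C / η * (2 * (δ + ω) + 4 * (1 / sg n)) + 4 * C / η * ∑ y ∈ s, |hn n μ y - hsh y| := by ring
        rw [hA]; beta_reduce
        linarith
      · have h1 : K ^ 2 ≤ u ^ 2 := by
          rw [← sq_abs u]
          gcongr
        have h3 : 2 * C ≤ ε / 8 * u ^ 2 := by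
          have : 2 * C ≤ ε / 8 * K ^ 2 := by rwa [div_le_iff₀ (by positivity)] at hKC
          have : ε / 8 * K ^ 2 ≤ ε / 8 * u ^ 2 := by gcongr
          linarith
        linarith [hA0 μ]
    have hTB : TT B μ = A μ + ε / 8 * (Mom 2 μ / sg n ^ 2) := by
      have e : ∀ i, Addable μ i → B μ i =
          A μ + (ε / 8 / sg n ^ 2) * cc μ i ^ 2 := fun i _ => by
        rw [hB]; beta_reduce; rw [div_pow]; ring
      rw [TT_congr (C := fun μ i => A μ + (ε / 8 / sg n ^ 2) * cc μ i ^ 2) e,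
        TT_add (fun μ _ => A μ) (fun μ i => (ε / 8 / sg n ^ 2) * cc μ i ^ 2), TT_const,
        TT_mul (fun _ => ε / 8 / sg n ^ 2) (fun μ i => cc μ i ^ 2)]
      unfold Mom
      ring
    have hle : |TT (fun μ i => f (cc μ i / sg n,
      ((μ.rowLen i + 1 : ℝ) + (i + 1)) / sg n)) μ -
        TT (fun μ i => f (cc μ i / sg n, Omegastar (cc μ i / sg n))) μ| ≤ TT B μ := by
      rw [abs_le]
      constructor
      · have : TT (fun μ i => f (cc μ i / sg n, Omegastar (cc μ i / sg n))) μ ≤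
          TT (fun μ i => f (cc μ i / sg n, ((μ.rowLen i + 1 : ℝ) + (i + 1)) / sg n) + B μ i) μ :=
          TT_mono fun i hi => by have := (abs_le.1 (pt i hi)).1; linarith
        rw [TT_add (fun μ i => f (cc μ i / sg n, ((μ.rowLen i + 1 : ℝ) + (i + 1)) / sg n)) B] at this
        linarith
      · have : TT (fun μ i => f (cc μ i / sg n, ((μ.rowLen i + 1 : ℝ) + (i + 1)) / sg n)) μ ≤
          TT (fun μ i => f (cc μ i / sg n, Omegastar (cc μ i / sg n)) + B μ i) μ :=
          TT_mono fun i hi => by have := (abs_le.1 (pt i hi)).2; linarith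
        rw [TT_add (fun μ i => f (cc μ i / sg n, Omegastar (cc μ i / sg n))) B] at this
        linarith
    refine hle.trans ?_
    rw [hTB]
    have hM : Mom 2 μ / sg n ^ 2 ≤ 1 + |Mom 2 μ / sg n ^ 2 - mm 2| := by
      have := le_abs_self (Mom 2 μ / sg n ^ 2 - mm 2)
      have h2 : mm 2 = 1 := by rw [show 2 = 2 * 1 from rfl, mm_even, catalan_one, Nat.cast_one]
      linarith
    have hM2 := mul_le_mul_of_nonneg_left hM (by positivity : 0 ≤ ε / 8)
    rw [hA]; beta_reduce
    linarith
  have hinv : Tendsto (fun n => 1 / sg n) atTop (𝓝 0) := by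
    simp only [one_div]; exact sg_tendsto.inv_tendsto_atTop
  have hD : Tendsto (fun n => Ex n (fun μ => ∑ y ∈ s, |hn n μ y - hsh y|)) atTop (𝓝 0) := by
    have : Tendsto (fun n => ∑ y ∈ s, Ex n (fun μ => |hn n μ y - hsh y|)) atTop (𝓝 (∑ y ∈ s, (0:ℝ))) :=
      tendsto_finsetSum _ fun y _ => hn_conv y
    rw [sum_const_zero] at this
    refine this.congr fun n => ?_
    rw [Ex_sum n s (fun y μ => |hn n μ y - hsh y|)]
  have hY : Tendsto (fun n => 2 * C / η * 4 * (1 / sg n) +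
      (4 * C / η * Ex n (fun μ => ∑ y ∈ s, |hn n μ y - hsh y|) +
      ε / 8 * Ex n (fun μ => |Mom 2 μ / sg n ^ 2 - mm 2|))) atTop (𝓝 0) := by
    have := (hinv.const_mul (2 * C / η * 4)).add ((hD.const_mul (4 * C / η)).add
      ((Mom_l1 2).const_mul (ε / 8)))
    simpa using this
  filter_upwards [ev_le hY (show 0 < ε / 4 by positivity)] with n hn'
  refine (Ex_mono n fun μ _ => key n μ).trans ?_
  rw [Ex_add, Ex_const, Ex_add, Ex_smul, Ex_smul]
  have h1 : 2 * C / η * (2 * (δ + ω)) ≤ ε / 4 := by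
    have : 2 * C / η * (2 * (δ + ω)) ≤ 2 * C / η * (2 * (ω + ω)) := by
      gcongr; exact min_le_right _ _
    refine this.trans (le_of_eq ?_)
    rw [hω]; field_simp; norm_num
  have h2 : 2 * C / η * (2 * (δ + ω) + 4 * (1 / sg n)) = 2 * C / η * (2 * (δ + ω)) +
    2 * C / η * 4 * (1 / sg n) := by ring
  linarith

lemma final_conv (f : ℝ × ℝ → ℝ) (hf : Continuous f) (C : ℝ) (hC : 0 < C) (hfC : ∀ x, |f x| ≤ C) :
    Tendsto (fun n => Ex n (TT (fun μ i => f (cc μ i / sg n,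
      ((μ.rowLen i + 1 : ℝ) + (i + 1)) / sg n)))) atTop
      (𝓝 (∫ x in (-2:ℝ)..2, f (x, Omegastar x) * scd x)) := by
  have h1 := main_conv f hf C hC hfC
  have h2 := trans_conv (fun u => f (u, Omegastar u)) (by have := cont_Omega; fun_prop) C
    (fun u => hfC _)
  rw [tendsto_iff_dist_tendsto_zero]
  refine squeeze_zero (fun _ => dist_nonneg) (fun n => ?_) (by simpa using h1.add h2)
  rw [Real.dist_eq, ← Ex_add]
  conv_lhs => rw [← Ex_const n (∫ x in (-2:ℝ)..2, f (x, Omegastar x) * scd x)]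
  rw [← Ex_sub]
  refine (Ex_abs _ _).trans (Ex_mono n fun μ _ => ?_)
  exact abs_sub_le _ _ _

end FinalP

theorem transition_measure_semicircle (P : Measure (ℕ → ℕ → ℕ)) (hP : PlancherelLike P)
    (f : BoundedContinuousFunction (ℝ × ℝ) ℝ) :
    Tendsto (fun n : ℕ =>
        ∫ t, f ((((entryPos t n).2 + 1 : ℝ) - ((entryPos t n).1 + 1)) / Real.sqrt n,
                (((entryPos t n).2 + 1 : ℝ) + ((entryPos t n).1 + 1)) / Real.sqrt n) ∂P)
      atTop
      (𝓝 (∫ u in Set.Icc (-2 : ℝ) 2,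
            f (u, Omegastar u) * (Real.sqrt (4 - u ^ 2) / (2 * Real.pi)))) := by
  rw [← tendsto_add_atTop_iff_nat 1]
  have h := final_conv f f.continuous (‖f‖ + 1) (by positivity)
    (fun x => (f.norm_coe_le_norm x).trans (by linarith))
  rw [intervalIntegral.integral_of_le (by norm_num), ← integral_Icc_eq_integral_Ioc] at h
  refine h.congr fun n => ?_
  have e : Real.sqrt ((n + 1 : ℕ) : ℝ) = sg n := by unfold sg; push_cast; rfl
  rw [integral_entryPos hP (fun c => f (((c.2 + 1 : ℝ) - (c.1 + 1)) / Real.sqrt ((n + 1 : ℕ) : ℝ),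
    ((c.2 + 1 : ℝ) + (c.1 + 1)) / Real.sqrt ((n + 1 : ℕ) : ℝ))) n, e]
  refine Ex_congr n fun μ _ => TT_congr fun i _ => ?_
  unfold cc
  simp only [add_sub_add_right_eq_sub]
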